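/- arXiv:1904.08578 — 4 statements merged into one kernel-verified Lean document; each statement's English description precedes it below -/
import Mathlib

section
/- Let V be a module over the N=2 Ramond algebra 𝔤, let n ≥ 1 be an integer, and let v ∈ V satisfy L_n v = L_{n+1} v = H_n v = G_n^+ v = G_n^- v = 0. Then there exists an integer N₀ > 0 such that L_ℓ v = H_ℓ v = G_ℓ^+ v = G_ℓ^- v = 0 for all integers ℓ ≥ N₀. -/
open Submodule

/-- A module over the `N = 2` Ramond algebra `𝔤`: a `ℤ/2`-graded complex vector
space `V = even ⊕ odd` with parity-preserving operators `L m`, `H m`,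
parity-reversing operators `Gp m` (`G_m^+`), `Gm m` (`G_m^-`), and a scalar `c₀`
(the action of the central element `C`), subject to the defining relations. -/
structure RamondRep (V : Type) [AddCommGroup V] [Module ℂ V] : Type where
  L : ℤ → V →ₗ[ℂ] V
  H : ℤ → V →ₗ[ℂ] V
  Gp : ℤ → V →ₗ[ℂ] V
  Gm : ℤ → V →ₗ[ℂ] V
  c₀ : ℂ
  even : Submodule ℂ V
  odd : Submodule ℂ V
  grading : IsCompl even odd
  L_even : ∀ (m : ℤ), ∀ v ∈ even, L m v ∈ even
  L_odd : ∀ (m : ℤ), ∀ v ∈ odd, L m v ∈ odd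
  H_even : ∀ (m : ℤ), ∀ v ∈ even, H m v ∈ even
  H_odd : ∀ (m : ℤ), ∀ v ∈ odd, H m v ∈ odd
  Gp_even : ∀ (m : ℤ), ∀ v ∈ even, Gp m v ∈ odd
  Gp_odd : ∀ (m : ℤ), ∀ v ∈ odd, Gp m v ∈ even
  Gm_even : ∀ (m : ℤ), ∀ v ∈ even, Gm m v ∈ odd
  Gm_odd : ∀ (m : ℤ), ∀ v ∈ odd, Gm m v ∈ even
  rel_LL : ∀ (m n : ℤ) (v : V),
    L m (L n v) - L n (L m v) =
      ((n : ℂ) - (m : ℂ)) • L (m + n) v +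
        ((1 / 12 : ℂ) * ((n : ℂ) ^ 3 - (n : ℂ)) *
          (if m + n = 0 then (1 : ℂ) else 0) * c₀) • v
  rel_HH : ∀ (m n : ℤ) (v : V),
    H m (H n v) - H n (H m v) =
      ((1 / 3 : ℂ) * (m : ℂ) * (if m + n = 0 then (1 : ℂ) else 0) * c₀) • v
  rel_LH : ∀ (m n : ℤ) (v : V),
    L m (H n v) - H n (L m v) = (n : ℂ) • H (m + n) v
  rel_LGp : ∀ (m p : ℤ) (v : V),
    L m (Gp p v) - Gp p (L m v) = ((p : ℂ) - (m : ℂ) / 2) • Gp (p + m) v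
  rel_LGm : ∀ (m p : ℤ) (v : V),
    L m (Gm p v) - Gm p (L m v) = ((p : ℂ) - (m : ℂ) / 2) • Gm (p + m) v
  rel_HGp : ∀ (m p : ℤ) (v : V),
    H m (Gp p v) - Gp p (H m v) = Gp (m + p) v
  rel_HGm : ∀ (m p : ℤ) (v : V),
    H m (Gm p v) - Gm p (H m v) = -(Gm (m + p) v)
  rel_GpGm : ∀ (p q : ℤ) (v : V),
    Gp p (Gm q v) + Gm q (Gp p v) =
      (-2 : ℂ) • L (p + q) v + ((p : ℂ) - (q : ℂ)) • H (p + q) v +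
        ((1 / 3 : ℂ) * ((p : ℂ) ^ 2 - 1 / 4) *
          (if p + q = 0 then (1 : ℂ) else 0) * c₀) • v
  rel_GpGp : ∀ (p q : ℤ) (v : V), Gp p (Gp q v) + Gp q (Gp p v) = 0
  rel_GmGm : ∀ (p q : ℤ) (v : V), Gm p (Gm q v) + Gm q (Gm p v) = 0

namespace RamondRep

variable {V : Type} [AddCommGroup V] [Module ℂ V]

/-- The weight space `V_μ = {v ∈ V : L₀ v = μ v}`. -/
def wt (ρ : RamondRep V) (μ : ℂ) : Submodule ℂ V :=
  Module.End.eigenspace (ρ.L 0) μ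

/-- The parity components, indexed by `ZMod 2`. -/
def parity (ρ : RamondRep V) (τ : ZMod 2) : Submodule ℂ V :=
  if τ = 0 then ρ.even else ρ.odd

/-- `V` is a weight module: it is the sum of its weight spaces. -/
def IsWeight (ρ : RamondRep V) : Prop := (⨆ μ : ℂ, ρ.wt μ) = ⊤

/-- `V` is cuspidal: a weight module with uniformly bounded weight multiplicities
in each parity. -/
def Cuspidal (ρ : RamondRep V) : Prop :=
  ρ.IsWeight ∧ ∃ p : ℕ, ∀ (μ : ℂ) (τ : ZMod 2),
    Module.rank ℂ ↥(ρ.wt μ ⊓ ρ.parity τ) ≤ (p : Cardinal)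

/-- A subspace invariant under all the operators. -/
def IsSubmod (ρ : RamondRep V) (W : Submodule ℂ V) : Prop :=
  (∀ (m : ℤ), ∀ v ∈ W, ρ.L m v ∈ W) ∧ (∀ (m : ℤ), ∀ v ∈ W, ρ.H m v ∈ W) ∧
    (∀ (m : ℤ), ∀ v ∈ W, ρ.Gp m v ∈ W) ∧ (∀ (m : ℤ), ∀ v ∈ W, ρ.Gm m v ∈ W)

/-- A graded subspace invariant under all the operators. -/
def IsGradedSubmod (ρ : RamondRep V) (W : Submodule ℂ V) : Prop :=
  ρ.IsSubmod W ∧ W = (W ⊓ ρ.even) ⊔ (W ⊓ ρ.odd)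

/-- The trivial representation: all operators act by zero. -/
def IsTrivialRep (ρ : RamondRep V) : Prop :=
  ∀ (m : ℤ) (v : V), ρ.L m v = 0 ∧ ρ.H m v = 0 ∧ ρ.Gp m v = 0 ∧ ρ.Gm m v = 0

/-- `V` is simple: nontrivial, and its only graded submodules are `⊥` and `⊤`. -/
def IsSimple (ρ : RamondRep V) : Prop :=
  ¬ ρ.IsTrivialRep ∧
    ∀ W : Submodule ℂ V, ρ.IsGradedSubmod W → W = ⊥ ∨ W = ⊤

/-- `V` is generated by `v` as a `𝔤`-module. -/
def GeneratedBy (ρ : RamondRep V) (v : V) : Prop :=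
  ∀ W : Submodule ℂ V, ρ.IsSubmod W → v ∈ W → W = ⊤

/-- `V` is a highest weight module. -/
def IsHighestWeight (ρ : RamondRep V) : Prop :=
  ∃ v : V, v ≠ 0 ∧ ρ.GeneratedBy v ∧
    (∃ h h' : ℂ, ρ.L 0 v = h • v ∧ ρ.H 0 v = h' • v) ∧
    (∀ m : ℤ, 0 < m → ρ.L m v = 0 ∧ ρ.H m v = 0 ∧ ρ.Gp m v = 0 ∧ ρ.Gm m v = 0) ∧
    ρ.Gp 0 v = 0

/-- `V` is a lowest weight module. -/
def IsLowestWeight (ρ : RamondRep V) : Prop :=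
  ∃ v : V, v ≠ 0 ∧ ρ.GeneratedBy v ∧
    (∃ h h' : ℂ, ρ.L 0 v = h • v ∧ ρ.H 0 v = h' • v) ∧
    (∀ m : ℤ, m < 0 → ρ.L m v = 0 ∧ ρ.H m v = 0 ∧ ρ.Gp m v = 0 ∧ ρ.Gm m v = 0) ∧
    ρ.Gm 0 v = 0

end RamondRep

/-!
The operators `L_n` and `L_{n+1}` move `G_p^±` to nonzero multiples of `G_{p+n}^±` and
`G_{p+n+1}^±` once `p` is large, and `n`, `n + 1` are coprime, so `v` is killed by all `G_ℓ^±` with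
`ℓ` large. Then `{G_p^+, G_q^-}` and `{G_q^+, G_p^-}` both kill `v` for large `p ≠ q`; they are
`-2 L_{p+q} ± (p - q) H_{p+q}`, and the vanishing of both separates `L_{p+q}` from `H_{p+q}`.
-/

namespace RamondRep

open Filter

variable {V : Type} [AddCommGroup V] [Module ℂ V] {ρ : RamondRep V}

/-- The operators `X p` are the modes of a primary field of conformal weight `h`. Here
`[L_m, L_n] = (n - m) L_{m+n}` (the opposite of the usual sign), hence
`[L_m, X_p] = (p - (h - 1) m) X_{p+m}`. -/
def IsPrimary (ρ : RamondRep V) (h : ℂ) (X : ℤ → V →ₗ[ℂ] V) : Prop :=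
  ∀ (m p : ℤ) (v : V),
    ρ.L m (X p v) - X p (ρ.L m v) = ((p : ℂ) - (h - 1) * m) • X (p + m) v

theorem isPrimary_Gp (ρ : RamondRep V) : ρ.IsPrimary (3 / 2) ρ.Gp := fun m p v => by
  rw [ρ.rel_LGp]
  congr 1
  ring

theorem isPrimary_Gm (ρ : RamondRep V) : ρ.IsPrimary (3 / 2) ρ.Gm := fun m p v => by
  rw [ρ.rel_LGm]
  congr 1
  ring

namespace IsPrimary

variable {h : ℂ} {X : ℤ → V →ₗ[ℂ] V} {v : V} {m p : ℤ}

theorem apply_add_eq_zero (hX : ρ.IsPrimary h X) (hLm : ρ.L m v = 0) (hXp : X p v = 0)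
    (hne : (p : ℂ) ≠ (h - 1) * m) : X (p + m) v = 0 := by
  have key := hX m p v
  rw [hXp, hLm, map_zero, map_zero, sub_zero] at key
  exact (smul_eq_zero.mp key.symm).resolve_left (sub_ne_zero.mpr hne)

theorem apply_add_mul_eq_zero (hX : ρ.IsPrimary h X) (hm : 0 ≤ m) (hLm : ρ.L m v = 0)
    (hXp : X p v = 0) (hne : ∀ q : ℤ, p ≤ q → (q : ℂ) ≠ (h - 1) * m) (k : ℕ) :
    X (p + k * m) v = 0 := by
  induction k with
  | zero => simpa using hXp
  | succ k ih =>
    have hstep := hX.apply_add_eq_zero hLm ih (hne _ (le_add_of_nonneg_right (by positivity)))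
    rwa [show p + ((k + 1 : ℕ) : ℤ) * m = p + k * m + m by push_cast; ring]

theorem eventually_apply_eq_zero (hX : ρ.IsPrimary h X) {a b : ℕ} (hab : a.Coprime b)
    (hLa : ρ.L a v = 0) (hLb : ρ.L b v = 0) (hXp : X p v = 0)
    (hne_a : ∀ q : ℤ, p ≤ q → (q : ℂ) ≠ (h - 1) * a)
    (hne_b : ∀ q : ℤ, p ≤ q → (q : ℂ) ≠ (h - 1) * b) :
    ∀ᶠ l : ℤ in atTop, X l v = 0 := by
  filter_upwards [eventually_ge_atTop (p + (a.pred * b.pred : ℕ))] with l hl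
  obtain ⟨d, rfl⟩ : ∃ d : ℕ, l = p + d := ⟨(l - p).toNat, by omega⟩
  obtain ⟨x, y, hxy⟩ := Nat.exists_add_mul_eq_of_gcd_dvd_of_mul_pred_le a b d
    (by simp [hab.gcd_eq_one]) (by omega)
  have hXa : X (p + x * a) v = 0 :=
    hX.apply_add_mul_eq_zero (by positivity) (mod_cast hLa) hXp (mod_cast hne_a) x
  have hXab : X (p + x * a + y * b) v = 0 :=
    hX.apply_add_mul_eq_zero (by positivity) (mod_cast hLb) hXa
      (fun q hq => mod_cast hne_b q (le_trans (le_add_of_nonneg_right (by positivity)) hq)) y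
  rwa [← hxy, show p + ((x * a + y * b : ℕ) : ℤ) = p + x * a + y * b by push_cast; ring]

theorem eventually_apply_eq_zero_of_weight_three_halves (hX : ρ.IsPrimary (3 / 2) X) {n : ℤ}
    (hn : 0 ≤ n) (hL : ρ.L n v = 0) (hL' : ρ.L (n + 1) v = 0) (hXn : X n v = 0) :
    ∀ᶠ l : ℤ in atTop, X l v = 0 := by
  have cast_ne {q m : ℤ} (hqm : 2 * q ≠ m) : (q : ℂ) ≠ (3 / 2 - 1) * m := fun heq =>
    hqm (by exact_mod_cast (by linear_combination 2 * heq : (2 * q : ℂ) = m))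
  -- For `n = 1` the direct step `[L_{n+1}, X_n] = (n - 1)/2 • X_{2n+1}` is lost,
  -- so `X_{3n+1}` is reached through `X_{2n}`.
  have hX2n : X (n + n) v = 0 := by
    rcases hn.eq_or_lt with rfl | hpos
    · simpa using hXn
    · exact hX.apply_add_eq_zero hL hXn (cast_ne (by omega))
  have hX3n : X (n + n + (n + 1)) v = 0 :=
    hX.apply_add_eq_zero hL' hX2n (cast_ne (by omega))
  lift n to ℕ using hn
  exact hX.eventually_apply_eq_zero (Nat.coprime_self_add_right.mpr (Nat.coprime_one_right n))
    hL (mod_cast hL') hX3n (fun q hq => mod_cast cast_ne (by omega))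
    (fun q hq => mod_cast cast_ne (by omega))

end IsPrimary

variable {v : V}

theorem L_add_and_H_add_apply_eq_zero {p q : ℤ} (hpq : p ≠ q) (hadd : p + q ≠ 0)
    (hGp_p : ρ.Gp p v = 0) (hGp_q : ρ.Gp q v = 0) (hGm_p : ρ.Gm p v = 0)
    (hGm_q : ρ.Gm q v = 0) : ρ.L (p + q) v = 0 ∧ ρ.H (p + q) v = 0 := by
  have h_pq : (-2 : ℂ) • ρ.L (p + q) v + ((p : ℂ) - q) • ρ.H (p + q) v = 0 := by
    simpa [hGp_p, hGm_q, hadd] using (ρ.rel_GpGm p q v).symm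
  have h_qp : (-2 : ℂ) • ρ.L (p + q) v + ((q : ℂ) - p) • ρ.H (p + q) v = 0 := by
    simpa [hGp_q, hGm_p, hadd, add_comm q p] using (ρ.rel_GpGm q p v).symm
  have hL : (-4 : ℂ) • ρ.L (p + q) v = 0 := by
    linear_combination (norm := module) h_pq + h_qp
  have hH : (2 * ((p : ℂ) - q)) • ρ.H (p + q) v = 0 := by
    linear_combination (norm := module) h_pq - h_qp
  have hsub : (p : ℂ) - q ≠ 0 := sub_ne_zero.mpr (mod_cast hpq)
  exact ⟨(smul_eq_zero.mp hL).resolve_left (by norm_num),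
    (smul_eq_zero.mp hH).resolve_left (mul_ne_zero two_ne_zero hsub)⟩

theorem eventually_L_and_H_apply_eq_zero (hGp : ∀ᶠ l : ℤ in atTop, ρ.Gp l v = 0)
    (hGm : ∀ᶠ l : ℤ in atTop, ρ.Gm l v = 0) :
    ∀ᶠ l : ℤ in atTop, ρ.L l v = 0 ∧ ρ.H l v = 0 := by
  obtain ⟨N, hN⟩ := eventually_atTop.mp (hGp.and hGm)
  filter_upwards [eventually_gt_atTop (2 * N), eventually_gt_atTop 0] with l hlN hl
  obtain ⟨hGp_N, hGm_N⟩ := hN N le_rfl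
  obtain ⟨hGp_sub, hGm_sub⟩ := hN (l - N) (by omega)
  simpa using L_add_and_H_add_apply_eq_zero (p := N) (q := l - N) (by omega) (by omega)
    hGp_N hGp_sub hGm_N hGm_sub

end RamondRep

theorem stmt3_general {V : Type} [AddCommGroup V] [Module ℂ V] (ρ : RamondRep V)
    (n : ℤ) (hn : 0 ≤ n) (v : V)
    (hL : ρ.L n v = 0) (hL' : ρ.L (n + 1) v = 0)
    (hGp : ρ.Gp n v = 0) (hGm : ρ.Gm n v = 0) :
    ∃ N₀ : ℤ, 0 < N₀ ∧ ∀ l : ℤ, N₀ ≤ l →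
      ρ.L l v = 0 ∧ ρ.H l v = 0 ∧ ρ.Gp l v = 0 ∧ ρ.Gm l v = 0 := by
  have hGp_ev := ρ.isPrimary_Gp.eventually_apply_eq_zero_of_weight_three_halves hn hL hL' hGp
  have hGm_ev := ρ.isPrimary_Gm.eventually_apply_eq_zero_of_weight_three_halves hn hL hL' hGm
  have hLH_ev := RamondRep.eventually_L_and_H_apply_eq_zero hGp_ev hGm_ev
  obtain ⟨N, hN⟩ := Filter.eventually_atTop.mp (hLH_ev.and (hGp_ev.and hGm_ev))
  refine ⟨max N 1, by positivity, fun l hl => ?_⟩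
  obtain ⟨⟨hLl, hHl⟩, hGpl, hGml⟩ := hN l (le_of_max_le_left hl)
  exact ⟨hLl, hHl, hGpl, hGml⟩

/-- if `v` is killed by `L_n, L_{n+1}, H_n, G_n^+, G_n^-` for some
`n ≥ 1`, then `v` is killed by `L_ℓ, H_ℓ, G_ℓ^+, G_ℓ^-` for all sufficiently
large `ℓ`. -/
theorem stmt3 {V : Type} [AddCommGroup V] [Module ℂ V] (ρ : RamondRep V)
    (n : ℤ) (hn : 1 ≤ n) (v : V)
    (hL : ρ.L n v = 0) (hL' : ρ.L (n + 1) v = 0) (hH : ρ.H n v = 0)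
    (hGp : ρ.Gp n v = 0) (hGm : ρ.Gm n v = 0) :
    ∃ N₀ : ℤ, 0 < N₀ ∧ ∀ l : ℤ, N₀ ≤ l →
      ρ.L l v = 0 ∧ ρ.H l v = 0 ∧ ρ.Gp l v = 0 ∧ ρ.Gm l v = 0 :=
  stmt3_general ρ n (zero_le_one.trans hn) v hL hL' hGp hGm
end

section
/- Let V be a cuspidal weight module over the twisted Heisenberg–Virasoro algebra 𝔱 which contains no trivial 𝔱-vector. Then there exists a positive integer m such that for every nonzero weight vector v whose weight (L₀-eigenvalue) is nonzero, every simple 𝔱-submodule V′ of the 𝔱-submodule generated by v satisfies V′ ⊆ Σ_{k=1}^m 𝔱^k v. -/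
open Submodule

/-- A module over the twisted Heisenberg–Virasoro algebra `𝔱`: a complex vector
space with operators `L m`, `H m` and a scalar `c₀` (the action of the central
element `C`) realizing the defining brackets as commutators. -/
structure HVRep (V : Type) [AddCommGroup V] [Module ℂ V] : Type where
  L : ℤ → V →ₗ[ℂ] V
  H : ℤ → V →ₗ[ℂ] V
  c₀ : ℂ
  rel_LL : ∀ (m n : ℤ) (v : V),
    L m (L n v) - L n (L m v) =
      ((n : ℂ) - (m : ℂ)) • L (m + n) v +
        ((1 / 12 : ℂ) * ((n : ℂ) ^ 3 - (n : ℂ)) *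
          (if m + n = 0 then (1 : ℂ) else 0) * c₀) • v
  rel_HH : ∀ (m n : ℤ) (v : V),
    H m (H n v) - H n (H m v) =
      ((1 / 3 : ℂ) * (m : ℂ) * (if m + n = 0 then (1 : ℂ) else 0) * c₀) • v
  rel_LH : ∀ (m n : ℤ) (v : V),
    L m (H n v) - H n (L m v) = (n : ℂ) • H (m + n) v

namespace HVRep

variable {V : Type} [AddCommGroup V] [Module ℂ V]

/-- The weight space `V_μ = {v ∈ V : L₀ v = μ v}`. -/
def wt (ρ : HVRep V) (μ : ℂ) : Submodule ℂ V :=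
  Module.End.eigenspace (ρ.L 0) μ

/-- `V` is a weight module: it is the sum of its weight spaces. -/
def IsWeight (ρ : HVRep V) : Prop := (⨆ μ : ℂ, ρ.wt μ) = ⊤

/-- `V` is cuspidal: a weight module with uniformly bounded weight multiplicities. -/
def Cuspidal (ρ : HVRep V) : Prop :=
  ρ.IsWeight ∧ ∃ p : ℕ, ∀ μ : ℂ, Module.rank ℂ ↥(ρ.wt μ) ≤ (p : Cardinal)

/-- A subspace invariant under all the operators. -/
def IsSubmod (ρ : HVRep V) (W : Submodule ℂ V) : Prop :=
  (∀ (m : ℤ), ∀ v ∈ W, ρ.L m v ∈ W) ∧ (∀ (m : ℤ), ∀ v ∈ W, ρ.H m v ∈ W)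

/-- The set of operators `{L_n, H_n : n ∈ ℤ}`. -/
def ops (ρ : HVRep V) : Set (V →ₗ[ℂ] V) := Set.range ρ.L ∪ Set.range ρ.H

/-- `tpow k S`: the set of all vectors `x₁ x₂ ⋯ x_k v` with `x_j ∈ {L_n, H_n}` and
`v ∈ S`; so `tpow k {v}` is the set `𝔱^k v` of the paper. -/
def tpow (ρ : HVRep V) : ℕ → Set V → Set V
  | 0, S => S
  | k + 1, S => {w | ∃ x ∈ ρ.ops, ∃ u ∈ ρ.tpow k S, w = x u}

/-- The `𝔱`-submodule `U(𝔱) v` generated by `v`. -/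
def genBy (ρ : HVRep V) (v : V) : Submodule ℂ V :=
  Submodule.span ℂ (⋃ k : ℕ, ρ.tpow k {v})

/-- A nonzero invariant subspace which is a simple (nontrivial, with no invariant
subspaces other than `0` and itself) `𝔱`-module. -/
def IsSimpleSubmod (ρ : HVRep V) (W : Submodule ℂ V) : Prop :=
  ρ.IsSubmod W ∧ (¬ ∀ (m : ℤ), ∀ v ∈ W, ρ.L m v = 0 ∧ ρ.H m v = 0) ∧
    ∀ U : Submodule ℂ V, ρ.IsSubmod U → U ≤ W → U = ⊥ ∨ U = W

end HVRep

/-!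
Filter `End V` by the powers of `T = span {1, L n, H n}`. Since `T` is closed under commutators,
the symbols of the left ideal `Ann v`, that is, the leading terms in `T ^ (n + 1) / T ^ n` of its
elements, form an ideal which is closed under the Poisson bracket. Let `p` bound the weight
multiplicities, let `r > 4 p`, and let `X` be `L` or `H`. For a monomial `B` of degree `r` in the
generators, a count of weight vectors shows that `B X_b` is a symbol of `Ann v` for all `b` outside
a set of density at most `p / r`. Given monomials `P₁, P₂, Q₁, Q₂` of degree `r`, some `b` avoids
the four exceptional sets for `P_i L_b` and `Q_i X_{a - b}`; expanding the Poisson bracket of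
`P₁ P₂ L_b` and `Q₁ Q₂ X_{a - b}` by the Leibniz rule then shows that
`P₁ P₂ Q₁ Q₂ [L_b, X_{a - b}]`, a multiple of `P₁ P₂ Q₁ Q₂ X_a`, is a symbol too. As `b` can be
chosen to make the multiple nonzero, every monomial of degree `4 r + 1` is a symbol of `Ann v`.
Hence `T ^ (4 r + 1) v ⊆ T ^ (4 r) v`, and so `U(𝔱) v = T ^ (4 r) v`. The identity in `T` does not
matter when `v` has weight `μ ≠ 0`, because then `v = μ⁻¹ L_0 v`.
-/

section LinearIndependence

variable {K E ι : Type*} [DivisionRing K] [AddCommGroup E] [Module K E] [LinearOrder ι]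

lemma linearIndepOn_of_notMem_span_lt {e : ι → E} {s : Finset ι}
    (h : ∀ i ∈ s, e i ∉ span K (e '' {j ∈ s | j < i})) : LinearIndepOn K e (s : Set ι) := by
  induction s using Finset.induction_on_max with
  | empty => simp
  | insert a s hs ih =>
    rw [Finset.coe_insert]
    refine (ih fun i hi hmem => ?_).insert fun hmem => ?_
    · refine h i (Finset.mem_insert_of_mem hi) (span_mono (Set.image_mono ?_) hmem)
      exact fun j hj => ⟨Finset.mem_insert_of_mem hj.1, hj.2⟩
    · refine h a (Finset.mem_insert_self a s) (span_mono (Set.image_mono ?_) hmem)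
      exact fun j hj => ⟨Finset.mem_insert_of_mem hj, hs j hj⟩

lemma card_le_of_notMem_span_lt {e : ι → E} {s : Finset ι} {W : Submodule K E} {p : ℕ}
    (hW : Module.rank K W ≤ p) (heW : ∀ i ∈ s, e i ∈ W)
    (h : ∀ i ∈ s, e i ∉ span K (e '' {j ∈ s | j < i})) : s.card ≤ p := by
  have hli : LinearIndependent K fun i : s => (⟨e i, heW i i.2⟩ : W) :=
    .of_comp W.subtype (linearIndepOn_of_notMem_span_lt h)
  have hcard := (Cardinal.lift_le.2 hW).trans' hli.cardinal_lift_le_rank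
  simpa using hcard

end LinearIndependence

section Density

variable {G : Type*} [AddCommGroup G]

/-- The subset `S` of an abelian group has density at most `δ`, in the translation-invariant sense
of upper Banach density: there is a nonempty finite family of shifts `w i` such that, for every
`g`, at most a proportion `δ` of the points `g - w i` lies in `S`. -/
def BanachDensityLE (S : Set G) (δ : ℝ) : Prop :=
  ∃ (ι : Type) (_ : Fintype ι) (_ : Nonempty ι) (w : ι → G),
    ∀ g, ∑ i, S.indicator (1 : G → ℝ) (g - w i) ≤ δ * Fintype.card ι

namespace BanachDensityLE

variable {S S' : Set G} {δ δ' : ℝ}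

lemma union (h : BanachDensityLE S δ) (h' : BanachDensityLE S' δ') :
    BanachDensityLE (S ∪ S') (δ + δ') := by
  obtain ⟨ι, _, _, w, hw⟩ := h
  obtain ⟨ι', _, _, w', hw'⟩ := h'
  refine ⟨ι × ι', inferInstance, inferInstance, fun i => w i.1 + w' i.2, fun g => ?_⟩
  have hunion (x : G) : (S ∪ S').indicator (1 : G → ℝ) x ≤ S.indicator 1 x + S'.indicator 1 x := by
    rw [← Set.indicator_union_add_inter_apply]
    exact le_add_of_nonneg_right (Set.indicator_nonneg (fun _ _ => zero_le_one) x)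
  have hS : ∑ i : ι × ι', S.indicator (1 : G → ℝ) (g - (w i.1 + w' i.2)) ≤
      ∑ _j : ι', δ * Fintype.card ι := by
    rw [Fintype.sum_prod_type_right]
    gcongr with j
    simpa only [sub_sub, add_comm] using hw (g - w' j)
  have hS' : ∑ i : ι × ι', S'.indicator (1 : G → ℝ) (g - (w i.1 + w' i.2)) ≤
      ∑ _i : ι, δ' * Fintype.card ι' := by
    rw [Fintype.sum_prod_type]
    gcongr with i
    simpa only [sub_sub] using hw' (g - w i)
  calc ∑ i : ι × ι', (S ∪ S').indicator (1 : G → ℝ) (g - (w i.1 + w' i.2))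
      ≤ ∑ i : ι × ι', (S.indicator (1 : G → ℝ) (g - (w i.1 + w' i.2)) +
          S'.indicator 1 (g - (w i.1 + w' i.2))) := Finset.sum_le_sum fun i _ => hunion _
    _ ≤ (∑ _j : ι', δ * Fintype.card ι) + ∑ _i : ι, δ' * Fintype.card ι' := by
        rw [Finset.sum_add_distrib]
        exact add_le_add hS hS'
    _ = (δ + δ') * Fintype.card (ι × ι') := by
        simp only [Finset.sum_const, Finset.card_univ, nsmul_eq_mul, Fintype.card_prod,
          Nat.cast_mul]
        ring

lemma preimage_sub_left (h : BanachDensityLE S δ) (a : G) :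
    BanachDensityLE ((a - ·) ⁻¹' S) δ := by
  obtain ⟨ι, _, _, w, hw⟩ := h
  refine ⟨ι, inferInstance, inferInstance, -w, fun g => ?_⟩
  refine le_of_eq_of_le (Finset.sum_congr rfl fun i _ => ?_) (hw (a - g))
  have hshift : a - (g - (-w) i) = a - g - w i := by rw [Pi.neg_apply]; abel
  rw [← hshift]
  exact Set.indicator_comp_right (a - ·) (g := (1 : G → ℝ))

lemma exists_ne_notMem [Infinite G] (h : BanachDensityLE S δ) (hδ : δ < 1) (x : G) :
    ∃ b ≠ x, b ∉ S := by
  obtain ⟨ι, _, _, w, hw⟩ := h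
  obtain ⟨g, hg⟩ := (Set.finite_range fun i => x + w i).exists_notMem
  by_contra! hS
  have hmem (i : ι) : g - w i ∈ S :=
    hS _ fun hx => hg ⟨i, (sub_eq_iff_eq_add.1 hx).symm⟩
  have hcard : (Fintype.card ι : ℝ) ≤ δ * Fintype.card ι := by simpa [hmem] using hw g
  exact hcard.not_gt (mul_lt_of_lt_one_left (Nat.cast_pos.2 Fintype.card_pos) hδ)

end BanachDensityLE

end Density

section AlmostCommutative

variable {R A : Type*} [CommRing R] [Ring A] [Algebra R A]

attribute [local instance] LieRing.ofAssociativeRing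

/-- A subspace of an associative algebra which contains `1` and is closed under commutators. Its
powers then form an almost commutative filtration, as for the image of `R ⊕ 𝔤` in a quotient of
the enveloping algebra of a Lie algebra `𝔤`. -/
structure IsLieFrame (T : Submodule R A) : Prop where
  one_mem : 1 ∈ T
  lie_mem : ∀ x ∈ T, ∀ y ∈ T, ⁅x, y⁆ ∈ T

/-- The symbols of degree `n + 1` of the left ideal `J`, for the filtration by powers of `T`. They
are encoded by their preimage in `T ^ (n + 1)`, so that a quotient by `T ^ n` is avoided. -/
def symbolIdeal (T : Submodule R A) (J : Ideal A) (n : ℕ) : Submodule R A :=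
  T ^ n ⊔ T ^ (n + 1) ⊓ J.restrictScalars R

variable {T : Submodule R A} {J : Ideal A} {a b m n r s : ℕ}

lemma mul_mem_pow_add {x y : A} (hx : x ∈ T ^ a) (hy : y ∈ T ^ b) : x * y ∈ T ^ (a + b) := by
  rw [pow_add]
  exact mul_mem_mul hx hy

lemma mem_symbolIdeal_of_sub_mem {y z : A} (hT : 1 ∈ T) (hy : y ∈ T ^ (n + 1)) (hz : z ∈ T ^ n)
    (h : y - z ∈ J) : y ∈ symbolIdeal T J n := by
  rw [← add_sub_cancel z y]
  exact add_mem_sup hz ⟨sub_mem hy (pow_le_pow_right' (one_le.2 hT) n.le_succ hz), h⟩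

lemma mul_mem_symbolIdeal {x y : A} (hx : x ∈ T ^ m) (hy : y ∈ symbolIdeal T J n) :
    x * y ∈ symbolIdeal T J (m + n) := by
  obtain ⟨z, hz, j, ⟨hjT, hjJ⟩, rfl⟩ := mem_sup.1 hy
  rw [mul_add]
  refine add_mem_sup (mul_mem_pow_add hx hz) ⟨?_, J.mul_mem_left x hjJ⟩
  rw [add_assoc]
  exact mul_mem_pow_add hx hjT

namespace IsLieFrame

lemma pow_mono (hT : IsLieFrame T) (h : a ≤ b) : T ^ a ≤ T ^ b :=
  pow_le_pow_right' (one_le.2 hT.one_mem) h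

lemma lie_mem_pow_of_mem (hT : IsLieFrame T) {x y : A} (hx : x ∈ T) (hy : y ∈ T ^ n) :
    ⁅x, y⁆ ∈ T ^ n := by
  induction n generalizing y with
  | zero =>
    rw [pow_zero] at hy
    obtain ⟨c, rfl⟩ := mem_one.1 hy
    rw [LieRing.of_associative_ring_bracket, Algebra.commutes, sub_self]
    exact zero_mem _
  | succ n ih =>
    rw [pow_succ'] at hy ⊢
    induction hy using Submodule.mul_induction_on' with
    | mem_mul_mem y hy z hz =>
      have leibniz : ⁅x, y * z⁆ = ⁅x, y⁆ * z + y * ⁅x, z⁆ := by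
        simp only [LieRing.of_associative_ring_bracket]; noncomm_ring
      rw [leibniz]
      exact add_mem (mul_mem_mul (hT.lie_mem x hx y hy) hz) (mul_mem_mul hy (ih hz))
    | add y _ z _ hy hz => rw [lie_add]; exact add_mem hy hz

lemma lie_mem_pow (hT : IsLieFrame T) {x y : A} (hx : x ∈ T ^ (m + 1)) (hy : y ∈ T ^ n) :
    ⁅x, y⁆ ∈ T ^ (m + n) := by
  induction m generalizing x with
  | zero =>
    rw [zero_add, pow_one] at hx
    simpa only [zero_add] using hT.lie_mem_pow_of_mem hx hy
  | succ m ih =>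
    rw [pow_succ'] at hx
    induction hx using Submodule.mul_induction_on' with
    | mem_mul_mem x hx z hz =>
      have leibniz : ⁅x * z, y⁆ = x * ⁅z, y⁆ + ⁅x, y⁆ * z := by
        simp only [LieRing.of_associative_ring_bracket]; noncomm_ring
      rw [leibniz]
      refine add_mem ?_ ?_
      · rw [Nat.add_right_comm, pow_succ']
        exact mul_mem_mul hx (ih hz)
      · rw [add_comm]
        exact mul_mem_pow_add (hT.lie_mem_pow_of_mem hx hy) hz
    | add x _ z _ hx hz => rw [add_lie]; exact add_mem hx hz

lemma lie_mem_pow' (hT : IsLieFrame T) {x y : A} (hx : x ∈ T ^ m) (hy : y ∈ T ^ (n + 1)) :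
    ⁅x, y⁆ ∈ T ^ (m + n) := by
  rw [← lie_skew, add_comm]
  exact neg_mem (hT.lie_mem_pow hy hx)

lemma symbolIdeal_le_pow (hT : IsLieFrame T) : symbolIdeal T J n ≤ T ^ (n + 1) :=
  sup_le (hT.pow_mono n.le_succ) inf_le_left

lemma symbolIdeal_mul_mem (hT : IsLieFrame T) {x y : A} (hy : y ∈ symbolIdeal T J n)
    (hx : x ∈ T ^ m) : y * x ∈ symbolIdeal T J (m + n) := by
  have hlie : ⁅y, x⁆ ∈ symbolIdeal T J (m + n) := by
    rw [add_comm]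
    exact mem_sup_left (hT.lie_mem_pow (hT.symbolIdeal_le_pow hy) hx)
  have hswap : y * x = x * y + ⁅y, x⁆ := by
    rw [LieRing.of_associative_ring_bracket]; abel
  rw [hswap]
  exact add_mem (mul_mem_symbolIdeal hx hy) hlie

lemma lie_mem_symbolIdeal (hT : IsLieFrame T) {x y : A} (hx : x ∈ symbolIdeal T J m)
    (hy : y ∈ symbolIdeal T J n) : ⁅x, y⁆ ∈ symbolIdeal T J (m + n) := by
  obtain ⟨z, hz, j, ⟨hjT, hjJ⟩, rfl⟩ := mem_sup.1 hx
  obtain ⟨z', hz', j', ⟨hjT', hjJ'⟩, rfl⟩ := mem_sup.1 hy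
  have hzy : ⁅z, z' + j'⁆ ∈ T ^ (m + n) :=
    hT.lie_mem_pow' hz (hT.symbolIdeal_le_pow hy)
  have hjz' : ⁅j, z'⁆ ∈ T ^ (m + n) := hT.lie_mem_pow hjT hz'
  have hjj' : ⁅j, j'⁆ ∈ T ^ (m + (n + 1)) := hT.lie_mem_pow hjT hjT'
  have hjj'J : ⁅j, j'⁆ ∈ J := sub_mem (J.mul_mem_left j hjJ') (J.mul_mem_left j' hjJ)
  rw [add_lie, lie_add j, ← add_assoc]
  exact add_mem_sup (add_mem hzy hjz') ⟨hjj', hjj'J⟩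

-- With two factors, each term of the Leibniz rule retains one of them next to `k`.
lemma lie_mul_mul_mem_symbolIdeal (hT : IsLieFrame T) {z A₁ A₂ k : A} (hz : z ∈ T ^ (s + 1))
    (h₁ : A₁ ∈ T ^ (r + 1)) (h₂ : A₂ ∈ T ^ (r + 1)) (hk : k ∈ T)
    (hk₁ : A₁ * k ∈ symbolIdeal T J (r + 1)) (hk₂ : A₂ * k ∈ symbolIdeal T J (r + 1)) :
    ⁅z, A₁ * A₂⁆ * k ∈ symbolIdeal T J (s + 2 * (r + 1)) := by
  have hz₁ : ⁅z, A₁⁆ ∈ T ^ (s + (r + 1)) := hT.lie_mem_pow hz h₁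
  have hz₂ : ⁅z, A₂⁆ ∈ T ^ (s + (r + 1)) := hT.lie_mem_pow hz h₂
  have hlow : ⁅A₁, ⁅z, A₂⁆⁆ * k ∈ T ^ (s + 2 * (r + 1)) := by
    have h := mul_mem_pow_add (b := 1) (hT.lie_mem_pow h₁ hz₂) (by rwa [pow_one])
    rwa [show r + (s + (r + 1)) + 1 = s + 2 * (r + 1) by ring] at h
  have leibniz : ⁅z, A₁ * A₂⁆ * k =
      ⁅z, A₁⁆ * (A₂ * k) + ⁅z, A₂⁆ * (A₁ * k) + ⁅A₁, ⁅z, A₂⁆⁆ * k := by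
    simp only [LieRing.of_associative_ring_bracket]; noncomm_ring
  rw [leibniz]
  refine add_mem (add_mem ?_ ?_) (mem_sup_left hlow) <;>
    rw [two_mul, ← add_assoc]
  exacts [mul_mem_symbolIdeal hz₁ hk₂, mul_mem_symbolIdeal hz₂ hk₁]

lemma mul_lie_mem_symbolIdeal (hT : IsLieFrame T) {P₁ P₂ Q₁ Q₂ l k : A}
    (hP₁ : P₁ ∈ T ^ (r + 1)) (hP₂ : P₂ ∈ T ^ (r + 1))
    (hQ₁ : Q₁ ∈ T ^ (r + 1)) (hQ₂ : Q₂ ∈ T ^ (r + 1)) (hl : l ∈ T) (hk : k ∈ T)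
    (hPl₁ : P₁ * l ∈ symbolIdeal T J (r + 1)) (hPl₂ : P₂ * l ∈ symbolIdeal T J (r + 1))
    (hQk₁ : Q₁ * k ∈ symbolIdeal T J (r + 1)) (hQk₂ : Q₂ * k ∈ symbolIdeal T J (r + 1)) :
    P₁ * P₂ * (Q₁ * Q₂) * ⁅l, k⁆ ∈ symbolIdeal T J (4 * (r + 1)) := by
  have hP : P₁ * P₂ ∈ T ^ (2 * (r + 1)) := by
    rw [two_mul]; exact mul_mem_pow_add hP₁ hP₂
  have hQ : Q₁ * Q₂ ∈ T ^ (2 * (r + 1)) := by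
    rw [two_mul]; exact mul_mem_pow_add hQ₁ hQ₂
  have hPl : P₁ * P₂ * l ∈ symbolIdeal T J (2 * (r + 1)) := by
    rw [mul_assoc, two_mul]; exact mul_mem_symbolIdeal hP₁ hPl₂
  have hQk : Q₁ * Q₂ * k ∈ symbolIdeal T J (2 * (r + 1)) := by
    rw [mul_assoc, two_mul]; exact mul_mem_symbolIdeal hQ₁ hQk₂
  have hlQ : ⁅l, Q₁ * Q₂⁆ * k ∈ symbolIdeal T J (0 + 2 * (r + 1)) :=
    hT.lie_mul_mul_mem_symbolIdeal (by rwa [zero_add, pow_one]) hQ₁ hQ₂ hk hQk₁ hQk₂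
  have hkP : ⁅k, P₁ * P₂⁆ * l ∈ symbolIdeal T J (0 + 2 * (r + 1)) :=
    hT.lie_mul_mul_mem_symbolIdeal (by rwa [zero_add, pow_one]) hP₁ hP₂ hl hPl₁ hPl₂
  have hPQ : ⁅P₁ * P₂, Q₁ * Q₂⁆ * k ∈ symbolIdeal T J (2 * r + 1 + 2 * (r + 1)) :=
    hT.lie_mul_mul_mem_symbolIdeal hP hQ₁ hQ₂ hk hQk₁ hQk₂
  have leibniz : P₁ * P₂ * (Q₁ * Q₂) * ⁅l, k⁆ =
      ⁅P₁ * P₂ * l, Q₁ * Q₂ * k⁆ - P₁ * P₂ * (⁅l, Q₁ * Q₂⁆ * k) +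
        Q₁ * Q₂ * (⁅k, P₁ * P₂⁆ * l) - ⁅P₁ * P₂, Q₁ * Q₂⁆ * k * l := by
    generalize P₁ * P₂ = P, Q₁ * Q₂ = Q
    simp only [LieRing.of_associative_ring_bracket]; noncomm_ring
  have hd : 2 * (r + 1) + 2 * (r + 1) = 4 * (r + 1) := by ring
  rw [zero_add] at hlQ hkP
  rw [leibniz]
  refine sub_mem (add_mem (sub_mem ?_ ?_) ?_) ?_
  · rw [← hd]; exact hT.lie_mem_symbolIdeal hPl hQk
  · rw [← hd]; exact mul_mem_symbolIdeal hP hlQ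
  · rw [← hd]; exact mul_mem_symbolIdeal hQ hkP
  · rw [show 4 * (r + 1) = 1 + (2 * r + 1 + 2 * (r + 1)) by ring]
    exact hT.symbolIdeal_mul_mem hPQ (by rwa [pow_one])

end IsLieFrame

lemma pow_le_pow_sup_of_pow_succ_le (hT : 1 ∈ T)
    (h : T ^ (n + 1) ≤ T ^ n ⊔ J.restrictScalars R) (k : ℕ) :
    T ^ k ≤ T ^ n ⊔ J.restrictScalars R := by
  have hJ : T * J.restrictScalars R ≤ J.restrictScalars R :=
    mul_le.2 fun x _ _ hj => J.mul_mem_left x hj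
  induction k with
  | zero => exact (pow_le_pow_right' (one_le.2 hT) n.zero_le).trans le_sup_left
  | succ k ih =>
    calc T ^ (k + 1) = T * T ^ k := pow_succ' T k
      _ ≤ T * (T ^ n ⊔ J.restrictScalars R) := mul_le_mul_right ih T
      _ = T ^ (n + 1) ⊔ T * J.restrictScalars R := by rw [Submodule.mul_sup, pow_succ']
      _ ≤ T ^ n ⊔ J.restrictScalars R := sup_le h (hJ.trans le_sup_right)

end AlmostCommutative

namespace HVRep

open scoped Pointwise

attribute [local instance] LieRing.ofAssociativeRing

variable {V : Type} [AddCommGroup V] [Module ℂ V] (ρ : HVRep V)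

section Filtration

/-- The operators `L n` and `H n` together with the identity. -/
def gens : Set (Module.End ℂ V) := insert 1 ρ.ops

/-- The image in `End V` of the first step of the standard filtration of the enveloping algebra
of `𝔱`; its power `n` is the image of the step `n`. -/
def degreeLEOne : Submodule ℂ (Module.End ℂ V) := span ℂ ρ.gens

variable {ρ} in
lemma mem_degreeLEOne_of_mem_gens {x : Module.End ℂ V} (hx : x ∈ ρ.gens) : x ∈ ρ.degreeLEOne :=
  subset_span hx

lemma one_mem_gens : 1 ∈ ρ.gens := Or.inl rfl

lemma L_mem_gens (n : ℤ) : ρ.L n ∈ ρ.gens := Or.inr (Or.inl ⟨n, rfl⟩)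

lemma H_mem_gens (n : ℤ) : ρ.H n ∈ ρ.gens := Or.inr (Or.inr ⟨n, rfl⟩)

lemma degreeLEOne_pow (n : ℕ) : ρ.degreeLEOne ^ n = span ℂ (ρ.gens ^ n) := span_pow ρ.gens n

variable {ρ} in
lemma mem_degreeLEOne_pow_of_mem_gens_pow {n : ℕ} {x : Module.End ℂ V} (hx : x ∈ ρ.gens ^ n) :
    x ∈ ρ.degreeLEOne ^ n := by
  rw [degreeLEOne_pow]
  exact subset_span hx

lemma lie_L_L (m n : ℤ) : (⁅ρ.L m, ρ.L n⁆ : Module.End ℂ V) =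
    ((n : ℂ) - m) • ρ.L (m + n) +
      ((1 / 12 : ℂ) * ((n : ℂ) ^ 3 - n) * (if m + n = 0 then (1 : ℂ) else 0) * ρ.c₀) •
        (1 : Module.End ℂ V) :=
  LinearMap.ext (ρ.rel_LL m n)

lemma lie_H_H (m n : ℤ) : (⁅ρ.H m, ρ.H n⁆ : Module.End ℂ V) =
    ((1 / 3 : ℂ) * m * (if m + n = 0 then (1 : ℂ) else 0) * ρ.c₀) • (1 : Module.End ℂ V) :=
  LinearMap.ext (ρ.rel_HH m n)

lemma lie_L_H (m n : ℤ) : (⁅ρ.L m, ρ.H n⁆ : Module.End ℂ V) = (n : ℂ) • ρ.H (m + n) :=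
  LinearMap.ext (ρ.rel_LH m n)

lemma lie_mem_degreeLEOne_of_mem_gens {x y : Module.End ℂ V} (hx : x ∈ ρ.gens)
    (hy : y ∈ ρ.gens) : ⁅x, y⁆ ∈ ρ.degreeLEOne := by
  have h1 := mem_degreeLEOne_of_mem_gens ρ.one_mem_gens
  have hL (n : ℤ) := mem_degreeLEOne_of_mem_gens (ρ.L_mem_gens n)
  have hH (n : ℤ) := mem_degreeLEOne_of_mem_gens (ρ.H_mem_gens n)
  rcases hx with rfl | ⟨m, rfl⟩ | ⟨m, rfl⟩ <;> rcases hy with rfl | ⟨n, rfl⟩ | ⟨n, rfl⟩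
  case inl.inl | inl.inr.inl | inl.inr.inr | inr.inl.inl | inr.inr.inl =>
    simp [LieRing.of_associative_ring_bracket]
  · rw [lie_L_L]
    exact add_mem (smul_mem _ _ (hL _)) (smul_mem _ _ h1)
  · rw [lie_L_H]
    exact smul_mem _ _ (hH _)
  · rw [← lie_skew, lie_L_H]
    exact neg_mem (smul_mem _ _ (hH _))
  · rw [lie_H_H]
    exact smul_mem _ _ h1

lemma isLieFrame_degreeLEOne : IsLieFrame ρ.degreeLEOne where
  one_mem := mem_degreeLEOne_of_mem_gens ρ.one_mem_gens
  lie_mem _ hx _ hy := LinearMap.BilinMap.apply_apply_mem_of_mem_span _ ρ.gens ρ.gens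
    (LieModule.toEnd ℂ (Module.End ℂ V) (Module.End ℂ V)).toLinearMap
    (fun _ hx _ hy => ρ.lie_mem_degreeLEOne_of_mem_gens hx hy) _ _ hx hy

/-- The symbols of the annihilator of `v`: the operators of degree at most `n + 1` which send `v`
to a vector of filtration degree at most `n`. -/
def symbolAnnihilator (v : V) (n : ℕ) : Submodule ℂ (Module.End ℂ V) :=
  symbolIdeal ρ.degreeLEOne (Ideal.torsionOf (Module.End ℂ V) V v) n

variable {ρ} in
lemma mem_symbolAnnihilator_of_apply_mem_map {x : Module.End ℂ V} {v : V} {n : ℕ}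
    (hx : x ∈ ρ.degreeLEOne ^ (n + 1))
    (hxv : x v ∈ (ρ.degreeLEOne ^ n).map (LinearMap.applyₗ v)) : x ∈ ρ.symbolAnnihilator v n := by
  obtain ⟨z, hz, hzx⟩ := hxv
  exact mem_symbolIdeal_of_sub_mem ρ.isLieFrame_degreeLEOne.one_mem hx hz (sub_eq_zero.2 hzx.symm)

end Filtration

section Grading

/-- The operator `z` is homogeneous of degree `w`: it shifts weights by `w`. -/
def HasDegree (w : ℤ) (z : Module.End ℂ V) : Prop := ⁅(ρ.L 0 : Module.End ℂ V), z⁆ = (w : ℂ) • z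

lemma hasDegree_one : ρ.HasDegree 0 1 := by
  simp [HasDegree, LieRing.of_associative_ring_bracket]

lemma hasDegree_L (n : ℤ) : ρ.HasDegree n (ρ.L n) := by
  rw [HasDegree, lie_L_L, zero_add]
  rcases eq_or_ne n 0 with rfl | hn <;> simp [*]

lemma hasDegree_H (n : ℤ) : ρ.HasDegree n (ρ.H n) := by
  rw [HasDegree, lie_L_H, zero_add]

variable {ρ}

lemma HasDegree.mul {w w' : ℤ} {z z' : Module.End ℂ V} (h : ρ.HasDegree w z)
    (h' : ρ.HasDegree w' z') : ρ.HasDegree (w + w') (z * z') := by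
  have leibniz : ⁅(ρ.L 0 : Module.End ℂ V), z * z'⁆ =
      ⁅(ρ.L 0 : Module.End ℂ V), z⁆ * z' + z * ⁅(ρ.L 0 : Module.End ℂ V), z'⁆ := by
    simp only [LieRing.of_associative_ring_bracket]; noncomm_ring
  rw [HasDegree, leibniz, h, h', smul_mul_assoc, mul_smul_comm, ← add_smul, Int.cast_add]

lemma HasDegree.apply_mem_wt {w : ℤ} {z : Module.End ℂ V} (h : ρ.HasDegree w z) {μ : ℂ} {v : V}
    (hv : v ∈ ρ.wt μ) : z v ∈ ρ.wt (μ + w) := by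
  rw [wt, Module.End.mem_eigenspace_iff] at hv ⊢
  have hzv : ρ.L 0 (z v) - z (ρ.L 0 v) = (w : ℂ) • z v := LinearMap.congr_fun h v
  rw [hv, map_smul, sub_eq_iff_eq_add] at hzv
  rw [hzv, add_comm, add_smul]

lemma exists_hasDegree_of_mem_gens {z : Module.End ℂ V} (hz : z ∈ ρ.gens) :
    ∃ w, ρ.HasDegree w z := by
  rcases hz with rfl | ⟨n, rfl⟩ | ⟨n, rfl⟩
  exacts [⟨0, ρ.hasDegree_one⟩, ⟨n, ρ.hasDegree_L n⟩, ⟨n, ρ.hasDegree_H n⟩]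

lemma exists_hasDegree_of_mem_gens_pow {n : ℕ} {z : Module.End ℂ V} (hz : z ∈ ρ.gens ^ n) :
    ∃ w, ρ.HasDegree w z := by
  induction n generalizing z with
  | zero =>
    obtain rfl : z = 1 := hz
    exact ⟨0, ρ.hasDegree_one⟩
  | succ n ih =>
    rw [pow_succ] at hz
    obtain ⟨y, hy, x, hx, rfl⟩ := hz
    obtain ⟨w, hw⟩ := ih hy
    obtain ⟨w', hw'⟩ := exists_hasDegree_of_mem_gens hx
    exact ⟨w + w', hw.mul hw'⟩

end Grading

section WeightMultiplicities

variable {ρ} {p r : ℕ} {μ : ℂ} {v : V} {B B₁ B₂ B₃ B₄ : Module.End ℂ V} {X : ℤ → Module.End ℂ V}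

-- Each tail `P i` of the monomial `B`, applied after `X (N - w i)`, sends `v` to weight `μ + N`.
-- Where `B * X b` is not a symbol, these images climb strictly in the filtration, so there are at
-- most `p` such `i`.
lemma banachDensityLE_mul_notMem_symbolAnnihilator
    (hp : ∀ μ : ℂ, Module.rank ℂ (ρ.wt μ) ≤ p) (hv : v ∈ ρ.wt μ) (hB : B ∈ ρ.gens ^ (r + 1))
    (hX : ∀ n, X n ∈ ρ.gens) (hdeg : ∀ n, ρ.HasDegree n (X n)) :
    BanachDensityLE {b | B * X b ∉ ρ.symbolAnnihilator v (r + 1)} (p / (r + 1)) := by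
  classical
  have hsplit (i : Fin (r + 1)) :
      ∃ Q ∈ ρ.gens ^ (r + 1 - i : ℕ), ∃ P ∈ ρ.gens ^ (i : ℕ), Q * P = B := by
    rwa [← Set.mem_mul, ← pow_add, Nat.sub_add_cancel i.2.le]
  choose Q hQ P hP hQP using hsplit
  choose w hw using fun i => exists_hasDegree_of_mem_gens_pow (hP i)
  refine ⟨Fin (r + 1), inferInstance, inferInstance, w, fun N => ?_⟩
  let e (i : Fin (r + 1)) : V := (P i * X (N - w i)) v
  let bad : Finset (Fin (r + 1)) := {i | B * X (N - w i) ∉ ρ.symbolAnnihilator v (r + 1)}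
  have he_wt (i : Fin (r + 1)) : e i ∈ ρ.wt (μ + N) := by
    have h := ((hw i).mul (hdeg (N - w i))).apply_mem_wt hv
    rwa [add_sub_cancel] at h
  have hPX (i : Fin (r + 1)) : P i * X (N - w i) ∈ ρ.degreeLEOne ^ (i + 1 : ℕ) := by
    refine mem_degreeLEOne_pow_of_mem_gens_pow ?_
    rw [pow_succ]
    exact Set.mul_mem_mul (hP i) (hX _)
  have he_bad : ∀ i ∈ bad, e i ∉ span ℂ (e '' {j ∈ bad | j < i}) := by
    intro i hi hspan
    have he_map : e i ∈ (ρ.degreeLEOne ^ (i : ℕ)).map (LinearMap.applyₗ v) := by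
      refine span_le.2 ?_ hspan
      rintro _ ⟨j, ⟨-, hji⟩, rfl⟩
      exact mem_map_of_mem (ρ.isLieFrame_degreeLEOne.pow_mono hji (hPX j))
    have hmem := mul_mem_symbolIdeal (mem_degreeLEOne_pow_of_mem_gens_pow (hQ i))
      (mem_symbolAnnihilator_of_apply_mem_map (hPX i) he_map)
    rw [← mul_assoc, hQP, Nat.sub_add_cancel i.2.le] at hmem
    exact (Finset.mem_filter.1 hi).2 hmem
  have hcard : bad.card ≤ p := card_le_of_notMem_span_lt (hp (μ + N)) (fun i _ => he_wt i) he_bad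
  have hsum : ∑ i, {b | B * X b ∉ ρ.symbolAnnihilator v (r + 1)}.indicator (1 : ℤ → ℝ) (N - w i) =
      bad.card := by
    simp only [Set.indicator_apply, Set.mem_ofPred_eq, Pi.one_apply, Finset.sum_boole, bad]
  rw [hsum, Fintype.card_fin, Nat.cast_add_one, div_mul_cancel₀ _ (by positivity)]
  exact_mod_cast hcard

lemma exists_ne_mul_lie_mem_symbolAnnihilator
    (hp : ∀ μ : ℂ, Module.rank ℂ (ρ.wt μ) ≤ p) (hv : v ∈ ρ.wt μ) (hr : 4 * p ≤ r)
    (h₁ : B₁ ∈ ρ.gens ^ (r + 1)) (h₂ : B₂ ∈ ρ.gens ^ (r + 1))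
    (h₃ : B₃ ∈ ρ.gens ^ (r + 1)) (h₄ : B₄ ∈ ρ.gens ^ (r + 1))
    (hX : ∀ n, X n ∈ ρ.gens) (hdeg : ∀ n, ρ.HasDegree n (X n)) (a x : ℤ) :
    ∃ b ≠ x, B₁ * B₂ * (B₃ * B₄) * ⁅(ρ.L b : Module.End ℂ V), X (a - b)⁆ ∈
      ρ.symbolAnnihilator v (4 * (r + 1)) := by
  have hL {B : Module.End ℂ V} (hB : B ∈ ρ.gens ^ (r + 1)) :=
    banachDensityLE_mul_notMem_symbolAnnihilator hp hv hB ρ.L_mem_gens ρ.hasDegree_L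
  have hX' {B : Module.End ℂ V} (hB : B ∈ ρ.gens ^ (r + 1)) :=
    (banachDensityLE_mul_notMem_symbolAnnihilator hp hv hB hX hdeg).preimage_sub_left a
  have hδ : (p / (r + 1) + p / (r + 1) + (p / (r + 1) + p / (r + 1)) : ℝ) < 1 := by
    have hr' : (4 * p : ℝ) ≤ r := by exact_mod_cast hr
    rw [← add_div, ← add_div, div_lt_one (by positivity)]
    linarith
  obtain ⟨b, hbx, hb⟩ :=
    (((hL h₁).union (hL h₂)).union ((hX' h₃).union (hX' h₄))).exists_ne_notMem hδ x
  simp only [Set.mem_union, Set.mem_preimage, Set.mem_ofPred_eq, not_or, not_not] at hb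
  obtain ⟨⟨hb₁, hb₂⟩, hb₃, hb₄⟩ := hb
  exact ⟨b, hbx, ρ.isLieFrame_degreeLEOne.mul_lie_mem_symbolIdeal
    (mem_degreeLEOne_pow_of_mem_gens_pow h₁) (mem_degreeLEOne_pow_of_mem_gens_pow h₂)
    (mem_degreeLEOne_pow_of_mem_gens_pow h₃) (mem_degreeLEOne_pow_of_mem_gens_pow h₄)
    (mem_degreeLEOne_of_mem_gens (ρ.L_mem_gens b)) (mem_degreeLEOne_of_mem_gens (hX (a - b)))
    hb₁ hb₂ hb₃ hb₄⟩

lemma mul_mem_symbolAnnihilator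
    (hp : ∀ μ : ℂ, Module.rank ℂ (ρ.wt μ) ≤ p) (hv : v ∈ ρ.wt μ) (hr : 4 * p ≤ r)
    (h₁ : B₁ ∈ ρ.gens ^ (r + 1)) (h₂ : B₂ ∈ ρ.gens ^ (r + 1))
    (h₃ : B₃ ∈ ρ.gens ^ (r + 1)) (h₄ : B₄ ∈ ρ.gens ^ (r + 1))
    {y : Module.End ℂ V} (hy : y ∈ ρ.gens) :
    B₁ * B₂ * (B₃ * B₄) * y ∈ ρ.symbolAnnihilator v (4 * (r + 1)) := by
  have hM : B₁ * B₂ * (B₃ * B₄) ∈ ρ.symbolAnnihilator v (4 * (r + 1)) := by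
    refine mem_sup_left (mem_degreeLEOne_pow_of_mem_gens_pow ?_)
    rw [show 4 * (r + 1) = r + 1 + (r + 1) + (r + 1 + (r + 1)) by ring, pow_add, pow_add]
    exact Set.mul_mem_mul (Set.mul_mem_mul h₁ h₂) (Set.mul_mem_mul h₃ h₄)
  rcases hy with rfl | ⟨a, rfl⟩ | ⟨a, rfl⟩
  · rwa [mul_one]
  · obtain ⟨b, hb, hlie⟩ := exists_ne_mul_lie_mem_symbolAnnihilator hp hv hr h₁ h₂ h₃ h₄
      ρ.L_mem_gens ρ.hasDegree_L a (a / 2)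
    rw [lie_L_L, add_sub_cancel, mul_add (B₁ * B₂ * (B₃ * B₄)), mul_smul_comm, mul_smul_comm,
      mul_one, Submodule.add_mem_iff_left _ (smul_mem _ _ hM)] at hlie
    refine (smul_mem_iff _ ?_).1 hlie
    exact_mod_cast show a - b - b ≠ 0 by omega
  · obtain ⟨b, hb, hlie⟩ := exists_ne_mul_lie_mem_symbolAnnihilator hp hv hr h₁ h₂ h₃ h₄
      ρ.H_mem_gens ρ.hasDegree_H a a
    rw [lie_L_H, add_sub_cancel, mul_smul_comm] at hlie
    refine (smul_mem_iff _ ?_).1 hlie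
    exact_mod_cast sub_ne_zero.2 hb.symm

lemma degreeLEOne_pow_le_symbolAnnihilator
    (hp : ∀ μ : ℂ, Module.rank ℂ (ρ.wt μ) ≤ p) (hv : v ∈ ρ.wt μ) (hr : 4 * p ≤ r) :
    ρ.degreeLEOne ^ (4 * (r + 1) + 1) ≤ ρ.symbolAnnihilator v (4 * (r + 1)) := by
  have hfactor : ρ.gens ^ (4 * (r + 1) + 1) = ρ.gens ^ (r + 1) * ρ.gens ^ (r + 1) *
      (ρ.gens ^ (r + 1) * ρ.gens ^ (r + 1)) * ρ.gens := by
    rw [← pow_add, ← pow_add, ← pow_succ]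
    congr 1
    ring
  rw [degreeLEOne_pow, span_le, hfactor]
  rintro _ ⟨_, ⟨_, ⟨B₁, h₁, B₂, h₂, rfl⟩, _, ⟨B₃, h₃, B₄, h₄, rfl⟩, rfl⟩, y, hy, rfl⟩
  exact mul_mem_symbolAnnihilator hp hv hr h₁ h₂ h₃ h₄ hy

end WeightMultiplicities

section GeneratedSubmodule

variable {ρ} {μ : ℂ} {v w : V} {n : ℕ}

lemma exists_mem_gens_pow_of_mem_tpow (hw : w ∈ ρ.tpow n {v}) : ∃ z ∈ ρ.gens ^ n, z v = w := by
  induction n generalizing w with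
  | zero => exact ⟨1, rfl, hw.symm⟩
  | succ n ih =>
    obtain ⟨x, hx, u, hu, rfl⟩ := hw
    obtain ⟨z, hz, rfl⟩ := ih hu
    rw [pow_succ']
    exact ⟨x * z, Set.mul_mem_mul (Or.inr hx) hz, rfl⟩

lemma exists_apply_mem_tpow {z : Module.End ℂ V} (hz : z ∈ ρ.gens ^ n) :
    ∃ k ≤ n, z v ∈ ρ.tpow k {v} := by
  induction n generalizing z with
  | zero =>
    obtain rfl : z = 1 := hz
    exact ⟨0, le_rfl, rfl⟩
  | succ n ih =>
    rw [pow_succ'] at hz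
    obtain ⟨x, rfl | hx, y, hy, rfl⟩ := hz <;> obtain ⟨k, hk, hky⟩ := ih hy
    · exact ⟨k, hk.trans n.le_succ, hky⟩
    · exact ⟨k + 1, Nat.succ_le_succ hk, x, hx, y v, hky, rfl⟩

lemma apply_mem_span_tpow (hμ : μ ≠ 0) (hv : v ∈ ρ.wt μ) (hn : 1 ≤ n) {z : Module.End ℂ V}
    (hz : z ∈ ρ.degreeLEOne ^ n) : z v ∈ span ℂ (⋃ k ∈ Finset.Icc 1 n, ρ.tpow k {v}) := by
  have hsub {k : ℕ} (hk : k ∈ Finset.Icc 1 n) :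
      ρ.tpow k {v} ⊆ span ℂ (⋃ k ∈ Finset.Icc 1 n, ρ.tpow k {v}) :=
    (Set.subset_biUnion_of_mem (u := fun k => ρ.tpow k {v}) hk).trans subset_span
  have hv_mem : v ∈ span ℂ (⋃ k ∈ Finset.Icc 1 n, ρ.tpow k {v}) := by
    have hLv : ρ.L 0 v = μ • v := Module.End.mem_eigenspace_iff.1 hv
    rw [← smul_mem_iff _ hμ, ← hLv]
    exact hsub (Finset.left_mem_Icc.2 hn) ⟨ρ.L 0, Or.inl ⟨0, rfl⟩, v, rfl, rfl⟩
  rw [degreeLEOne_pow] at hz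
  refine span_le (p := (span ℂ _).comap (LinearMap.applyₗ v)).2 (fun y hy => ?_) hz
  obtain ⟨_ | k, hk, hkv⟩ := exists_apply_mem_tpow (v := v) hy
  · have hyv : y v = v := hkv
    simpa only [SetLike.mem_coe, mem_comap, LinearMap.applyₗ_apply_apply, hyv] using hv_mem
  · exact hsub (Finset.mem_Icc.2 ⟨k.succ_pos, hk⟩) hkv

end GeneratedSubmodule

end HVRep

theorem stmt4_general {V : Type} [AddCommGroup V] [Module ℂ V] (ρ : HVRep V) {p : ℕ}
    (hp : ∀ μ : ℂ, Module.rank ℂ (ρ.wt μ) ≤ p) {μ : ℂ} (hμ : μ ≠ 0) {v : V} (hv : v ∈ ρ.wt μ) :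
    ρ.genBy v ≤ span ℂ (⋃ k ∈ Finset.Icc 1 (4 * (4 * p + 1)), ρ.tpow k {v}) := by
  refine span_le.2 (Set.iUnion_subset fun k w hw => ?_)
  obtain ⟨z, hz, rfl⟩ := HVRep.exists_mem_gens_pow_of_mem_tpow hw
  have hpow : ρ.degreeLEOne ^ k ≤ ρ.degreeLEOne ^ (4 * (4 * p + 1)) ⊔
      (Ideal.torsionOf (Module.End ℂ V) V v).restrictScalars ℂ :=
    pow_le_pow_sup_of_pow_succ_le ρ.isLieFrame_degreeLEOne.one_mem
      ((HVRep.degreeLEOne_pow_le_symbolAnnihilator hp hv le_rfl).trans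
        (sup_le_sup_left inf_le_right _)) k
  obtain ⟨y, hy, j, hj, rfl⟩ := mem_sup.1 (hpow (HVRep.mem_degreeLEOne_pow_of_mem_gens_pow hz))
  have hjv : j v = 0 := hj
  rw [LinearMap.add_apply, hjv, add_zero]
  exact HVRep.apply_mem_span_tpow hμ hv (by omega) hy

/-- Lemma 3.1 of the paper. If `V` is a cuspidal weight `𝔱`-module
with no trivial `𝔱`-vector, then there is `m ∈ ℤ₊` such that for every nonzero
weight vector `v` of nonzero weight, every simple `𝔱`-submodule `V'` of `U(𝔱)v`
satisfies `V' ⊆ Σ_{1 ≤ k ≤ m} 𝔱^k v`. -/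
theorem stmt4 {V : Type} [AddCommGroup V] [Module ℂ V] (ρ : HVRep V)
    (hweight : ρ.IsWeight) (hcusp : ρ.Cuspidal)
    (hnotriv : ¬ ∃ v : V, v ≠ 0 ∧ ∀ m : ℤ, ρ.L m v = 0 ∧ ρ.H m v = 0) :
    ∃ m : ℕ, 0 < m ∧ ∀ μ : ℂ, μ ≠ 0 → ∀ v ∈ ρ.wt μ, v ≠ 0 →
      ∀ V' : Submodule ℂ V, ρ.IsSimpleSubmod V' → V' ≤ ρ.genBy v →
        V' ≤ Submodule.span ℂ (⋃ k ∈ Finset.Icc 1 m, ρ.tpow k {v}) := by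
  obtain ⟨-, p, hp⟩ := hcusp
  exact ⟨4 * (4 * p + 1), by omega, fun μ hμ v hv _ V' _ hV' =>
    hV'.trans (stmt4_general ρ hp hμ hv)⟩
end

section
/- Let V be a cuspidal weight module over the Virasoro algebra Vir which contains no trivial Vir-vector. Then there exists a positive integer m such that for every nonzero weight vector v whose weight (L₀-eigenvalue) is nonzero, every simple Vir-submodule V′ of the Vir-submodule generated by v satisfies V′ ⊆ Σ_{k=1}^m Vir^k v. -/
open Submodule

/-- A module over the Virasoro algebra `Vir`: a complex vector space with
operators `L m` and a scalar `c₀` (the action of the central element `C`)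
realizing the defining brackets as commutators. -/
structure VirRep (V : Type) [AddCommGroup V] [Module ℂ V] : Type where
  L : ℤ → V →ₗ[ℂ] V
  c₀ : ℂ
  rel_LL : ∀ (m n : ℤ) (v : V),
    L m (L n v) - L n (L m v) =
      ((n : ℂ) - (m : ℂ)) • L (m + n) v +
        ((1 / 12 : ℂ) * ((n : ℂ) ^ 3 - (n : ℂ)) *
          (if m + n = 0 then (1 : ℂ) else 0) * c₀) • v

namespace VirRep

variable {V : Type} [AddCommGroup V] [Module ℂ V]

/-- The weight space `V_μ = {v ∈ V : L₀ v = μ v}`. -/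
def wt (ρ : VirRep V) (μ : ℂ) : Submodule ℂ V :=
  Module.End.eigenspace (ρ.L 0) μ

/-- `V` is a weight module: it is the sum of its weight spaces. -/
def IsWeight (ρ : VirRep V) : Prop := (⨆ μ : ℂ, ρ.wt μ) = ⊤

/-- `V` is cuspidal: a weight module with uniformly bounded weight multiplicities. -/
def Cuspidal (ρ : VirRep V) : Prop :=
  ρ.IsWeight ∧ ∃ p : ℕ, ∀ μ : ℂ, Module.rank ℂ ↥(ρ.wt μ) ≤ (p : Cardinal)

/-- A subspace invariant under all the operators. -/
def IsSubmod (ρ : VirRep V) (W : Submodule ℂ V) : Prop :=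
  ∀ (m : ℤ), ∀ v ∈ W, ρ.L m v ∈ W

/-- `virpow k S`: the set of all vectors `x₁ x₂ ⋯ x_k v` with `x_j ∈ {L_n}` and
`v ∈ S`; so `virpow k {v}` is the set `Vir^k v` of the paper. -/
def virpow (ρ : VirRep V) : ℕ → Set V → Set V
  | 0, S => S
  | k + 1, S => {w | ∃ n : ℤ, ∃ u ∈ ρ.virpow k S, w = ρ.L n u}

/-- The `Vir`-submodule `U(Vir) v` generated by `v`. -/
def genBy (ρ : VirRep V) (v : V) : Submodule ℂ V :=
  Submodule.span ℂ (⋃ k : ℕ, ρ.virpow k {v})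

/-- A nonzero invariant subspace which is a simple (nontrivial, with no invariant
subspaces other than `0` and itself) `Vir`-module. -/
def IsSimpleSubmod (ρ : VirRep V) (W : Submodule ℂ V) : Prop :=
  ρ.IsSubmod W ∧ (¬ ∀ (m : ℤ), ∀ v ∈ W, ρ.L m v = 0) ∧
    ∀ U : Submodule ℂ V, ρ.IsSubmod U → U ≤ W → U = ⊥ ∨ U = W

end VirRep

/-!
Fix `v` of weight `μ ≠ 0`. On the sum of the weight spaces with weights in `μ + ℤ` the Casimir
element of `⟨L (-1), L 0, L 1⟩ ≅ 𝔰𝔩₂` has at most `4 * p` eigenvalues, where `p` bounds the weight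
multiplicities: by `𝔰𝔩₂`-theory, each eigenvalue occurs in almost all weight spaces in one of the
two directions, or in `h`-weight `0` or `1`. So a monic polynomial of bounded degree annihilates the
Casimir element.

Passing to leading symbols for the filtration by the length of words in the `L j`, the relations
form a Poisson ideal `J` of the symmetric algebra of the Witt algebra, and `J` contains a power of
`X 0 ^ 2 - X 1 * X (-1)`. Applying Hamiltonian derivations to this form, and separating the
resulting products of variables by a lexicographic order, reduces every long product of variables
modulo `J` to the ideal of `X (-2), …, X 2`. These five variables are nilpotent modulo `J` and
`X 0`, because the radical of `J` is again Poisson. Hence `J` and `X 0` generate an ideal containing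
all products of sufficiently many variables, which says that a long word equals a shorter word times
`L 0`, up to shorter words. As `L 0` acts on `v` by a scalar, bounded words applied to `v` span the
module generated by `v`; the empty word is no exception since `v = μ⁻¹ • L 0 v`.
-/

/-! ### Derivations and polarization -/

theorem mem_ideal_of_smul_mem {K A : Type*} [Field K] [CommRing A] [Algebra K A] {I : Ideal A}
    {c : K} (hc : c ≠ 0) {f : A} (h : c • f ∈ I) : f ∈ I :=
  ((I.restrictScalars K).smul_mem_iff hc).1 h

section Derivation

variable {R A : Type*} [CommRing R] [CommRing A] [Algebra R A]

theorem derivation_pow_mem_of_pow_mul_pow_mem [Algebra ℚ A] {D : Derivation R A A} {J : Ideal A}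
    (hJ : ∀ f ∈ J, D f ∈ J) {f : A} {s t : ℕ} (h : f ^ t * D f ^ (2 * s) ∈ J) :
    D f ^ (2 * (s + t)) ∈ J := by
  induction t generalizing s with
  | zero => simpa using h
  | succ t ih =>
    have leibniz : D f * D (f ^ (t + 1) * D f ^ (2 * s)) =
        ((t + 1 : ℕ) : ℚ) • (f ^ t * D f ^ (2 * (s + 1))) +
          (2 * s : ℕ) * D (D f) * (f ^ (t + 1) * D f ^ (2 * s)) := by
      rw [Nat.cast_smul_eq_nsmul, nsmul_eq_mul]
      rcases s with _ | s
      · simp only [mul_zero, pow_zero, mul_one, Derivation.leibniz_pow, Nat.add_sub_cancel,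
          smul_eq_mul, nsmul_eq_mul, zero_add, Nat.cast_zero, zero_mul, add_zero]
        ring
      · simp only [Derivation.leibniz, Derivation.leibniz_pow, smul_eq_mul, nsmul_eq_mul,
          Nat.add_sub_cancel, show 2 * (s + 1) - 1 = 2 * s + 1 by omega]
        ring
    have hmul := J.mul_mem_left (D f) (hJ _ h)
    rw [leibniz, J.add_mem_iff_left (J.mul_mem_left _ h)] at hmul
    have := ih (mem_ideal_of_smul_mem (Nat.cast_ne_zero.2 t.succ_ne_zero) hmul)
    rwa [add_right_comm, add_assoc] at this

theorem derivation_mem_radical [Algebra ℚ A] {D : Derivation R A A} {J : Ideal A}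
    (hJ : ∀ f ∈ J, D f ∈ J) {f : A} (hf : f ∈ J.radical) : D f ∈ J.radical := by
  obtain ⟨t, ht⟩ := hf
  exact ⟨2 * (0 + t), derivation_pow_mem_of_pow_mul_pow_mem hJ (by simpa using ht)⟩

theorem derivation_mem_pow (D : Derivation R A A) {I : Ideal A} {n : ℕ} {f : A}
    (hf : f ∈ I ^ (n + 1)) : D f ∈ I ^ n := by
  induction n generalizing f with
  | zero => simp
  | succ n ih =>
    rw [pow_succ] at hf
    induction hf using Submodule.mul_induction_on' with
    | mem_mul_mem x hx y hy =>
      rw [Derivation.leibniz, smul_eq_mul, smul_eq_mul, pow_succ, mul_comm y]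
      exact add_mem (pow_succ I n ▸ Ideal.mul_mem_right _ _ hx) (Ideal.mul_mem_mul (ih hx) hy)
    | add x _ y _ hx hy => simpa only [map_add] using add_mem hx hy

/-- The composite `D (n - 1) ∘ ⋯ ∘ D 0` of a tuple of derivations. -/
def iterDerivation : {n : ℕ} → (Fin n → Derivation R A A) → A →ₗ[R] A
  | 0, _ => LinearMap.id
  | _ + 1, D => iterDerivation (Fin.tail D) ∘ₗ (D 0).toLinearMap

theorem iterDerivation_succ {n : ℕ} (D : Fin (n + 1) → Derivation R A A) (f : A) :
    iterDerivation D f = iterDerivation (Fin.tail D) (D 0 f) := rfl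

theorem iterDerivation_mem {n : ℕ} {D : Fin n → Derivation R A A} {J : Ideal A}
    (hJ : ∀ i, ∀ f ∈ J, D i f ∈ J) {f : A} (hf : f ∈ J) : iterDerivation D f ∈ J := by
  induction n generalizing f with
  | zero => exact hf
  | succ n ih => exact ih (fun i => hJ i.succ) (hJ 0 f hf)

theorem iterDerivation_mem_of_mem_pow {n : ℕ} (D : Fin n → Derivation R A A) {I : Ideal A}
    {f : A} (hf : f ∈ I ^ (n + 1)) : iterDerivation D f ∈ I := by
  induction n generalizing f with
  | zero => simpa [iterDerivation] using hf
  | succ n ih => exact ih _ (derivation_mem_pow (D 0) hf)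

end Derivation

section Polarization

open MvPolynomial

variable {R A σ : Type*} [CommRing R] [CommRing A] [Algebra R A]

theorem derivation_aeval [Fintype σ] (D : Derivation R A A) (x : σ → A) (f : MvPolynomial σ R) :
    D (aeval x f) = ∑ j, aeval x (pderiv j f) * D (x j) := by
  classical
  induction f using MvPolynomial.induction_on with
  | C r => simp
  | add f g hf hg => simp only [map_add, hf, hg, add_mul, Finset.sum_add_distrib]
  | mul_X f i hf =>
    simp only [map_mul, aeval_X, Derivation.leibniz, smul_eq_mul, hf, map_add, add_mul,
      Finset.sum_add_distrib, pderiv_X, Pi.single_apply, Finset.mul_sum]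
    simp [apply_ite, mul_assoc]

theorem aeval_mem_pow_of_isHomogeneous {I : Ideal A} {x : σ → A} (hx : ∀ i, x i ∈ I) {n : ℕ}
    {f : MvPolynomial σ R} (hf : f.IsHomogeneous n) : aeval x f ∈ I ^ n := by
  have hmap : (idealOfVars σ R).map (aeval x) ≤ I := by
    rw [Ideal.map_le_iff_le_comap, idealOfVars, Ideal.span_le]
    rintro _ ⟨i, rfl⟩
    simpa using hx i
  have hmem : f ∈ idealOfVars σ R ^ n :=
    (mem_pow_idealOfVars_iff' n f).2 fun d hd => by
      contrapose! hd
      exact (Finsupp.degree_eq_weight_one (R := ℕ) ▸ hf hd).ge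
  have := Ideal.mem_map_of_mem (aeval x) hmem
  rw [Ideal.map_pow] at this
  exact Ideal.pow_right_mono hmap n this

/-- The coefficients of the full polarization of a form `f` of degree `n`: up to a scalar,
`polar f c` is the coefficient of `f` at the monomial `∏ i, X (c i)`. -/
noncomputable def polarCoeff {n : ℕ} (f : MvPolynomial σ R) (c : Fin n → σ) : R :=
  constantCoeff (iterDerivation (fun i => pderiv (c i)) f)

theorem polarCoeff_cons {n : ℕ} (f : MvPolynomial σ R) (j : σ) (c : Fin n → σ) :
    polarCoeff f (Fin.cons j c : Fin (n + 1) → σ) = polarCoeff (pderiv j f) c := rfl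

/-- Each derivation must hit a different factor of `f`, since the factors left over lie in `I`. -/
theorem iterDerivation_mul_aeval_sub_mem [Fintype σ] {I : Ideal A} {x : σ → A} (hx : ∀ i, x i ∈ I)
    {n : ℕ} {f : MvPolynomial σ R} (hf : f.IsHomogeneous n) (D : Fin n → Derivation R A A) (g : A) :
    iterDerivation D (g * aeval x f) -
      g * ∑ c : Fin n → σ, polarCoeff f c • ∏ i, D i (x (c i)) ∈ I := by
  induction n generalizing f g with
  | zero =>
    rw [totalDegree_eq_zero_iff_eq_C.1 (Nat.le_zero.1 hf.totalDegree_le)]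
    simp [iterDerivation, polarCoeff, Algebra.smul_def]
  | succ n ih =>
    have hstep : iterDerivation D (g * aeval x f) =
        iterDerivation (Fin.tail D) (D 0 g * aeval x f) +
          ∑ j, iterDerivation (Fin.tail D) (g * D 0 (x j) * aeval x (pderiv j f)) := by
      rw [iterDerivation_succ, ← map_sum, ← map_add]
      congr 1
      rw [Derivation.leibniz, derivation_aeval, smul_eq_mul, smul_eq_mul, Finset.mul_sum, add_comm,
        mul_comm (aeval x f)]
      simp only [mul_assoc, mul_comm (D 0 _)]
    have hsum : g * ∑ c : Fin (n + 1) → σ, polarCoeff f c • ∏ i, D i (x (c i)) =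
        ∑ j, g * D 0 (x j) * ∑ c : Fin n → σ,
          polarCoeff (pderiv j f) c • ∏ i, Fin.tail D i (x (c i)) := by
      rw [← (Fin.consEquiv fun _ => σ).sum_comp, Fintype.sum_prod_type, Finset.mul_sum]
      refine Finset.sum_congr rfl fun j _ => ?_
      rw [mul_assoc, Finset.mul_sum _ _ (D 0 (x j))]
      congr 1
      refine Finset.sum_congr rfl fun c _ => ?_
      simp [Fin.consEquiv, Fin.prod_univ_succ, polarCoeff_cons, Fin.tail]
    rw [hstep, hsum, add_sub_assoc, ← Finset.sum_sub_distrib]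
    exact add_mem
      (iterDerivation_mem_of_mem_pow _ (Ideal.mul_mem_left _ _
        (aeval_mem_pow_of_isHomogeneous hx hf)))
      (sum_mem fun j _ => ih hf.pderiv _ _)

theorem exists_polarCoeff_ne_zero [Finite σ] [IsDomain R] [CharZero R] {n : ℕ}
    {f : MvPolynomial σ R} (hf : f.IsHomogeneous n) (hf0 : f ≠ 0) :
    ∃ c : Fin n → σ, polarCoeff f c ≠ 0 := by
  cases nonempty_fintype σ
  induction n generalizing f with
  | zero =>
    refine ⟨Fin.elim0, fun h => hf0 ?_⟩
    rw [totalDegree_eq_zero_iff_eq_C.1 (Nat.le_zero.1 hf.totalDegree_le)]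
    exact (congrArg C h).trans C_0
  | succ n ih =>
    obtain ⟨j, hj⟩ : ∃ j, pderiv j f ≠ 0 := by
      by_contra! h
      have euler := hf.sum_X_mul_pderiv
      simp only [h, mul_zero, Finset.sum_const_zero] at euler
      exact smul_ne_zero n.succ_ne_zero hf0 euler.symm
    obtain ⟨c, hc⟩ := ih hf.pderiv hj
    exact ⟨Fin.cons j c, hc⟩

end Polarization

/-! ### Poisson ideals of the symmetric algebra of the Witt algebra -/

section WittPoisson

open MvPolynomial

variable {K : Type*} [Field K]

variable (K) in
/-- The Hamiltonian derivation `{X a, ·}` of the symmetric algebra of the Witt algebra, for the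
Kirillov–Kostant Poisson bracket `{X a, X j} = (j - a) X (a + j)`. -/
noncomputable def wittDer (a : ℤ) : Derivation K (MvPolynomial ℤ K) (MvPolynomial ℤ K) :=
  mkDerivation K fun j => ((j : K) - a) • X (a + j)

theorem wittDer_X (a j : ℤ) : wittDer K a (X j) = ((j : K) - a) • X (a + j) := by
  simp [wittDer]

/-- Poisson ideals of the symmetric algebra of the Witt algebra. By the Leibniz rule, it is enough
to ask for stability under the bracket with the generators. -/
def IsPoissonIdeal (J : Ideal (MvPolynomial ℤ K)) : Prop :=
  ∀ a, ∀ f ∈ J, wittDer K a f ∈ J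

theorem IsPoissonIdeal.radical [CharZero K] {J : Ideal (MvPolynomial ℤ K)} (hJ : IsPoissonIdeal J) :
    IsPoissonIdeal J.radical :=
  fun a _ hf => derivation_mem_radical (hJ a) hf

theorem isPoissonIdeal_sInf {S : Set (Ideal (MvPolynomial ℤ K))}
    (hS : ∀ J ∈ S, IsPoissonIdeal J) : IsPoissonIdeal (sInf S) := by
  intro a f hf
  rw [Ideal.mem_sInf] at hf ⊢
  exact fun {J} hJ => hS J hJ a f (hf hJ)

variable (K) in
/-- The ideal generated by the variables `X j` with `|j| ≤ b`. -/
noncomputable def slabIdeal (b : ℕ) : Ideal (MvPolynomial ℤ K) :=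
  Ideal.span (X '' {j : ℤ | j.natAbs ≤ b})

theorem X_mem_slabIdeal {b : ℕ} {j : ℤ} (hj : j.natAbs ≤ b) : X j ∈ slabIdeal K b :=
  Ideal.subset_span ⟨j, hj, rfl⟩

theorem slabIdeal_mono {b c : ℕ} (h : b ≤ c) : slabIdeal K b ≤ slabIdeal K c :=
  Ideal.span_mono (Set.image_mono fun _ hj => le_trans hj h)

theorem slabIdeal_fg (b : ℕ) : (slabIdeal K b).FG := by
  have hfin : {j : ℤ | j.natAbs ≤ b}.Finite :=
    (Set.finite_Icc (-b : ℤ) b).subset fun j (hj : j.natAbs ≤ b) => by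
      constructor <;> omega
  exact Submodule.fg_span (hfin.image X)

theorem toLex_natAbs_sub_add_lt {ι : Type*} [LinearOrder ι] {b : ℕ} {y c c₀ : ι → ℤ}
    (hy : ∀ i, 2 * b < (y i).natAbs) (hc : ∀ i, (c i).natAbs ≤ b) (hc₀ : ∀ i, (c₀ i).natAbs ≤ b)
    (h : toLex (fun i => (y i).sign * c i) < toLex (fun i => (y i).sign * c₀ i)) :
    toLex (fun i => (y i - c₀ i + c i).natAbs) < toLex (fun i => (y i).natAbs) := by
  have habs (i : ι) : ((y i - c₀ i + c i).natAbs : ℤ) =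
      (y i).natAbs - (y i).sign * c₀ i + (y i).sign * c i := by
    have := hy i; have := hc i; have := hc₀ i
    rcases lt_trichotomy (y i) 0 with h | h | h
    · rw [Int.sign_eq_neg_one_of_neg h]; omega
    · omega
    · rw [Int.sign_eq_one_of_pos h]; omega
  obtain ⟨i, heq, hlt⟩ := h
  refine ⟨i, fun j hj => ?_, ?_⟩
  · have hcj : (y j).sign * c j = (y j).sign * c₀ j := heq j hj
    have := habs j
    simp only [Pi.toLex_apply]
    omega
  · have hci : (y i).sign * c i < (y i).sign * c₀ i := hlt
    have := habs i
    simp only [Pi.toLex_apply]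
    omega

section Sweep

variable {σ : Type*} {u : σ → ℤ} {b n : ℕ} {J : Ideal (MvPolynomial ℤ K)}
  {f : MvPolynomial σ K}

theorem sum_polarCoeff_smul_prod_X_mem [Fintype σ] (hJ : IsPoissonIdeal J)
    (hu : ∀ i, (u i).natAbs ≤ b) (hf : f.IsHomogeneous n) (hfJ : aeval (X ∘ u) f ∈ J)
    (a : Fin n → ℤ) :
    ∑ c : Fin n → σ, (polarCoeff f c * ∏ i, ((u (c i) : K) - a i)) • ∏ i, X (a i + u (c i)) ∈
      J ⊔ slabIdeal K b := by
  have hmem : iterDerivation (fun i => wittDer K (a i)) (aeval (X ∘ u) f) ∈ J :=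
    iterDerivation_mem (fun i => hJ (a i)) hfJ
  have hsub := iterDerivation_mul_aeval_sub_mem (x := X ∘ u)
    (fun i => X_mem_slabIdeal (K := K) (hu i)) hf (fun i => wittDer K (a i)) 1
  simp only [one_mul, Function.comp_apply, wittDer_X, Finset.prod_smul, smul_smul] at hsub
  have := sub_mem (Ideal.mem_sup_left (T := slabIdeal K b) hmem)
    (Ideal.mem_sup_right (S := J) hsub)
  rwa [sub_sub_cancel] at this

theorem prod_X_mem_sup_slabIdeal [CharZero K] [Finite σ] (hJ : IsPoissonIdeal J)
    (hu : ∀ i, (u i).natAbs ≤ b) (hinj : Function.Injective u) (hf : f.IsHomogeneous n)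
    (hf0 : f ≠ 0) (hfJ : aeval (X ∘ u) f ∈ J) (y : Fin n → ℤ) :
    ∏ i, X (y i) ∈ J ⊔ slabIdeal K (2 * b) := by
  classical
  cases nonempty_fintype σ
  induction hk : toLex fun i => (y i).natAbs using WellFoundedLT.induction generalizing y with
  | ind k ih =>
  subst hk
  by_cases hsmall : ∃ i, (y i).natAbs ≤ 2 * b
  · obtain ⟨i, hi⟩ := hsmall
    rw [← Finset.mul_prod_erase _ _ (Finset.mem_univ i)]
    exact Ideal.mem_sup_right (Ideal.mul_mem_right _ _ (X_mem_slabIdeal hi))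
  push Not at hsmall
  obtain ⟨c₀, hc₀, hmax⟩ := ({c | polarCoeff f c ≠ 0} : Finset (Fin n → σ)).exists_max_image
    (fun c => toLex fun i => (y i).sign * u (c i))
    ((exists_polarCoeff_ne_zero hf hf0).imp fun c hc => by simpa using hc)
  have hlex (c : Fin n → σ) (hc : polarCoeff f c ≠ 0) (hne : c ≠ c₀) :
      ∏ i, X (y i - u (c₀ i) + u (c i)) ∈ J ⊔ slabIdeal K (2 * b) := by
    refine ih _ (toLex_natAbs_sub_add_lt hsmall (fun i => hu (c i)) (fun i => hu (c₀ i))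
      ((hmax c (by simpa using hc)).lt_of_ne fun h => hne (funext fun i => hinj ?_))) _ rfl
    have hy : (y i).sign ≠ 0 := Int.sign_eq_zero_iff_zero.not.2 (by have := hsmall i; omega)
    exact mul_left_cancel₀ hy (congrFun (toLex.injective h) i)
  have hsum := sup_le_sup_left (slabIdeal_mono (by omega : b ≤ 2 * b)) J
    (sum_polarCoeff_smul_prod_X_mem hJ hu hf hfJ fun i => y i - u (c₀ i))
  rw [← Finset.add_sum_erase _ _ (Finset.mem_univ c₀), Ideal.add_mem_iff_left] at hsum
  · have hcoeff : polarCoeff f c₀ * ∏ i, ((u (c₀ i) : K) - (y i - u (c₀ i) : ℤ)) ≠ 0 := by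
      refine mul_ne_zero (by simpa using hc₀) (Finset.prod_ne_zero_iff.2 fun i _ => ?_)
      have := hsmall i
      have := hu (c₀ i)
      exact_mod_cast (show u (c₀ i) - (y i - u (c₀ i)) ≠ 0 by omega)
    simpa only [sub_add_cancel] using mem_ideal_of_smul_mem hcoeff hsum
  · refine sum_mem fun c hc => ?_
    by_cases hz : polarCoeff f c = 0
    · simp [hz]
    · exact Submodule.smul_of_tower_mem _ _ (hlex c hz (Finset.ne_of_mem_erase hc))

theorem idealOfVars_pow_le_sup_slabIdeal [CharZero K] [Finite σ] (hJ : IsPoissonIdeal J)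
    (hu : ∀ i, (u i).natAbs ≤ b) (hinj : Function.Injective u) (hf : f.IsHomogeneous n)
    (hf0 : f ≠ 0) (hfJ : aeval (X ∘ u) f ∈ J) : idealOfVars ℤ K ^ n ≤ J ⊔ slabIdeal K (2 * b) := by
  rw [idealOfVars, Ideal.span, Submodule.span_pow, Submodule.span_le]
  intro x hx
  obtain ⟨g, rfl⟩ := Set.mem_pow.1 hx
  choose y hy using fun i => (g i).2
  simpa [List.prod_ofFn, ← hy] using prod_X_mem_sup_slabIdeal hJ hu hinj hf hf0 hfJ y

end Sweep

section Casimir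

variable (K) in
/-- The symbol of the Casimir element of the subalgebra `⟨L (-s), L 0, L s⟩ ≅ 𝔰𝔩₂`. -/
noncomputable def casimirSymbol (s : ℤ) : MvPolynomial ℤ K := X 0 ^ 2 - X s * X (-s)

theorem casimirSymbol_neg (s : ℤ) : casimirSymbol K (-s) = casimirSymbol K s := by
  rw [casimirSymbol, casimirSymbol, neg_neg, mul_comm (X s)]

theorem wittDer_casimirSymbol (s : ℤ) : wittDer K (2 * s) (casimirSymbol K s) =
    (s : K) • (3 * X s ^ 2 + X (3 * s) * X (-s) - 4 * (X 0 * X (2 * s))) := by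
  simp only [casimirSymbol, map_sub, Derivation.leibniz, Derivation.leibniz_pow, wittDer_X,
    smul_eq_mul, smul_eq_C_mul, nsmul_eq_mul, Int.cast_mul, Int.cast_neg, Int.cast_zero,
    Int.cast_ofNat, map_sub, map_mul, map_neg, map_ofNat, map_zero]
  ring_nf

theorem wittDer_wittDer_casimirSymbol (s : ℤ) :
    wittDer K (2 * s) (3 * X s ^ 2 + X (3 * s) * X (-s) - 4 * (X 0 * X (2 * s))) =
      (s : K) • (8 * X (2 * s) ^ 2 - 9 * (X (3 * s) * X s) + X (5 * s) * X (-s)) := by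
  have h3 : wittDer K (2 * s) 3 = 0 := Derivation.map_natCast _ 3
  have h4 : wittDer K (2 * s) 4 = 0 := Derivation.map_natCast _ 4
  simp only [map_sub, map_add, Derivation.leibniz, Derivation.leibniz_pow, wittDer_X, h3, h4,
    smul_eq_mul, smul_eq_C_mul, nsmul_eq_mul, Int.cast_mul, Int.cast_neg, Int.cast_zero,
    Int.cast_ofNat, map_mul, map_neg, map_ofNat, map_zero]
  ring_nf

variable [CharZero K] {J R : Ideal (MvPolynomial ℤ K)} {s : ℤ}

theorem wittDer_casimirSymbol_mem (hJ : IsPoissonIdeal J) (hs : s ≠ 0)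
    (hq : casimirSymbol K s ∈ J) :
    3 * X s ^ 2 + X (3 * s) * X (-s) - 4 * (X 0 * X (2 * s)) ∈ J := by
  have := hJ (2 * s) _ hq
  rw [wittDer_casimirSymbol] at this
  exact mem_ideal_of_smul_mem (Int.cast_ne_zero.2 hs) this

theorem X_mem_of_casimirSymbol_mem (hJ : IsPoissonIdeal J) (hs : s ≠ 0)
    (hq : casimirSymbol K s ∈ J) (hR : R.IsRadical) (hJR : J ≤ R) (h0 : X 0 ∈ R) : X s ∈ R := by
  have hprod : X s * X (-s) ∈ R := by
    have := sub_mem (Ideal.pow_mem_of_mem R h0 2 two_pos) (hJR hq)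
    rwa [casimirSymbol, sub_sub_cancel] at this
  refine hR ⟨3, mem_ideal_of_smul_mem (c := (3 : K)) (by norm_num) ?_⟩
  have hcube : (3 : K) • (X s ^ 3 : MvPolynomial ℤ K) =
      X s * (3 * X s ^ 2 + X (3 * s) * X (-s) - 4 * (X 0 * X (2 * s))) -
        X (3 * s) * (X s * X (-s)) + 4 * X s * X (2 * s) * X 0 := by
    rw [smul_eq_C_mul, map_ofNat]
    ring
  rw [hcube]
  exact add_mem (sub_mem (R.mul_mem_left _ (hJR (wittDer_casimirSymbol_mem hJ hs hq)))
    (R.mul_mem_left _ hprod)) (R.mul_mem_left _ h0)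

theorem X_two_mul_mem_of_casimirSymbol_mem (hJ : IsPoissonIdeal J) (hs : s ≠ 0)
    (hq : casimirSymbol K s ∈ J) (hR : R.IsRadical) (hJR : J ≤ R) (h0 : X 0 ∈ R) :
    X (2 * s) ∈ R := by
  have hX : X s ∈ R := X_mem_of_casimirSymbol_mem hJ hs hq hR hJR h0
  have hX' : X (-s) ∈ R := X_mem_of_casimirSymbol_mem hJ (neg_ne_zero.2 hs)
    (by rwa [casimirSymbol_neg]) hR hJR h0
  have hder := hJ (2 * s) _ (wittDer_casimirSymbol_mem hJ hs hq)
  rw [wittDer_wittDer_casimirSymbol] at hder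
  refine hR ⟨2, mem_ideal_of_smul_mem (c := (8 : K)) (by norm_num) ?_⟩
  have hsq : (8 : K) • (X (2 * s) ^ 2 : MvPolynomial ℤ K) =
      8 * X (2 * s) ^ 2 - 9 * (X (3 * s) * X s) + X (5 * s) * X (-s) +
        9 * X (3 * s) * X s - X (5 * s) * X (-s) := by
    rw [smul_eq_C_mul, map_ofNat]
    ring
  rw [hsq]
  exact sub_mem (add_mem (hJR (mem_ideal_of_smul_mem (Int.cast_ne_zero.2 hs) hder))
    (R.mul_mem_left _ hX)) (R.mul_mem_left _ hX')

theorem slabIdeal_two_le_radical (hJ : IsPoissonIdeal J) {d : ℕ}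
    (hq : casimirSymbol K 1 ^ d ∈ J) : slabIdeal K 2 ≤ (J ⊔ Ideal.span {X 0}).radical := by
  set R := (J ⊔ Ideal.span {(X 0 : MvPolynomial ℤ K)}).radical
  have hR : R.IsRadical := Ideal.radical_isRadical _
  have hJR : J.radical ≤ R := Ideal.radical_mono le_sup_left
  have h0 : X 0 ∈ R := Ideal.le_radical (Ideal.mem_sup_right (Ideal.mem_span_singleton_self _))
  have hq1 : casimirSymbol K 1 ∈ J.radical := ⟨d, hq⟩
  have hqn : casimirSymbol K (-1) ∈ J.radical := (casimirSymbol_neg (K := K) 1).symm ▸ hq1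
  rw [slabIdeal, Ideal.span_le]
  rintro _ ⟨j, hj : j.natAbs ≤ 2, rfl⟩
  obtain rfl | rfl | rfl | rfl | rfl : j = 0 ∨ j = 1 ∨ j = 2 * 1 ∨ j = -1 ∨ j = 2 * -1 := by omega
  · exact h0
  · exact X_mem_of_casimirSymbol_mem hJ.radical one_ne_zero hq1 hR hJR h0
  · exact X_two_mul_mem_of_casimirSymbol_mem hJ.radical one_ne_zero hq1 hR hJR h0
  · exact X_mem_of_casimirSymbol_mem hJ.radical (by norm_num) hqn hR hJR h0
  · exact X_two_mul_mem_of_casimirSymbol_mem hJ.radical (by norm_num) hqn hR hJR h0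

theorem idealOfVars_pow_le_of_casimirSymbol_pow_mem (hJ : IsPoissonIdeal J) {d : ℕ}
    (hq : casimirSymbol K 1 ^ d ∈ J) : idealOfVars ℤ K ^ (2 * d) ≤ J ⊔ slabIdeal K 2 := by
  let f : MvPolynomial (Fin 3) K := X 0 ^ 2 - X 1 * X 2
  have hf : f.IsHomogeneous 2 :=
    ((isHomogeneous_X K 0).pow 2).sub ((isHomogeneous_X K 1).mul (isHomogeneous_X K 2))
  have hf0 : f ≠ 0 := fun h => by
    simpa [f] using congrArg (eval ![(1 : K), 0, 0]) h
  refine idealOfVars_pow_le_sup_slabIdeal (u := ![0, 1, -1]) (b := 1) (f := f ^ d) hJ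
    (by decide) (by decide) (hf.pow d) (pow_ne_zero d hf0) ?_
  simpa [f, casimirSymbol] using hq

variable (K) in
/-- The exponent can be chosen uniformly, by working with the smallest Poisson ideal containing
`casimirSymbol K 1 ^ d`. -/
theorem exists_idealOfVars_pow_le (d : ℕ) : ∃ m, ∀ J : Ideal (MvPolynomial ℤ K),
    IsPoissonIdeal J → casimirSymbol K 1 ^ d ∈ J →
      idealOfVars ℤ K ^ m ≤ J ⊔ Ideal.span {X 0} := by
  let S : Set (Ideal (MvPolynomial ℤ K)) := {J | IsPoissonIdeal J ∧ casimirSymbol K 1 ^ d ∈ J}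
  have hJ : IsPoissonIdeal (sInf S) := isPoissonIdeal_sInf fun J hJ => hJ.1
  have hq : casimirSymbol K 1 ^ d ∈ sInf S := Ideal.mem_sInf.2 fun {J} hJ => hJ.2
  obtain ⟨N, hN⟩ :=
    Ideal.exists_pow_le_of_le_radical_of_fg (slabIdeal_two_le_radical hJ hq) (slabIdeal_fg 2)
  refine ⟨2 * d * (1 + N), fun J hJ' hq' => ?_⟩
  calc idealOfVars ℤ K ^ (2 * d * (1 + N))
      ≤ (sInf S ⊔ slabIdeal K 2) ^ (1 + N) := by
        rw [pow_mul]
        exact Ideal.pow_right_mono (idealOfVars_pow_le_of_casimirSymbol_pow_mem hJ hq) _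
    _ ≤ sInf S ^ 1 ⊔ slabIdeal K 2 ^ N := Ideal.sup_pow_add_le_pow_sup_pow
    _ ≤ J ⊔ Ideal.span {X 0} := by
        rw [pow_one]
        have hle : sInf S ⊔ Ideal.span {X 0} ≤ J ⊔ Ideal.span {X 0} :=
          sup_le_sup_right (sInf_le (show J ∈ S from ⟨hJ', hq'⟩)) _
        exact (sup_le le_sup_left hN).trans hle

end Casimir

end WittPoisson

/-! ### The Casimir element of `𝔰𝔩₂` -/

section Endomorphism

open Polynomial

variable {K M : Type*} [Field K] [AddCommGroup M] [Module K M]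

theorem aeval_apply_of_intertwining {M' : Type*} [AddCommGroup M'] [Module K M']
    {g : Module.End K M} {g' : Module.End K M'} {φ : M →ₗ[K] M'} (h : ∀ w, φ (g w) = g' (φ w))
    (P : K[X]) (w : M) : φ (aeval g P w) = aeval g' P (φ w) := by
  induction P using Polynomial.induction_on' generalizing w with
  | add P Q hP hQ => simp only [map_add, LinearMap.add_apply, hP, hQ]
  | monomial n c =>
    have hpow (n : ℕ) : ∀ w, φ ((g ^ n) w) = (g' ^ n) (φ w) := by
      induction n with
      | zero => exact fun _ => rfl
      | succ n ih =>
        intro w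
        rw [pow_succ', pow_succ', Module.End.mul_apply, Module.End.mul_apply, h, ih]
    rw [aeval_monomial, aeval_monomial, Module.End.mul_apply, Module.End.mul_apply,
      Module.algebraMap_end_apply, Module.algebraMap_end_apply, map_smul, hpow]

theorem aeval_pow_finrank_eq_zero [IsAlgClosed K] [FiniteDimensional K M] {g : Module.End K M}
    {P : K[X]} (hP : ∀ κ, g.HasEigenvalue κ → P.IsRoot κ) :
    aeval g (P ^ Module.finrank K M) = 0 := by
  have hdvd : g.charpoly ∣ P ^ Module.finrank K M := by
    rw [(IsAlgClosed.splits g.charpoly).eq_prod_roots_of_monic g.charpoly_monic,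
      ← g.charpoly_natDegree, (IsAlgClosed.splits g.charpoly).natDegree_eq_card_roots,
      ← Multiset.prod_replicate, ← Multiset.map_const']
    refine Multiset.prod_dvd_prod_of_dvd _ _ fun κ hκ => dvd_iff_isRoot.2 (hP κ ?_)
    exact (g.hasEigenvalue_iff_isRoot_charpoly κ).2 (isRoot_of_mem_roots hκ)
  exact aeval_eq_zero_of_dvd_aeval_eq_zero hdvd g.aeval_self_charpoly

theorem aeval_pow_apply_eq_zero_of_rank_le [IsAlgClosed K] {W : Submodule K M}
    {g : Module.End K M} {p : ℕ} (hp : Module.rank K W ≤ p) (hW : ∀ w ∈ W, g w ∈ W) {P : K[X]}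
    (hP : ∀ κ, ∀ w ∈ W, w ≠ 0 → g w = κ • w → P.IsRoot κ) {w : M} (hw : w ∈ W) :
    aeval g (P ^ p) w = 0 := by
  have := Module.rank_lt_aleph0_iff.1 (hp.trans_lt Cardinal.natCast_lt_aleph0)
  have hroot (κ : K) (hκ : Module.End.HasEigenvalue (g.restrict hW) κ) : P.IsRoot κ := by
    obtain ⟨w, hw⟩ := hκ.exists_hasEigenvector
    exact hP κ w w.2 (by simpa using hw.2) (congrArg Subtype.val hw.apply_eq_smul)
  have hdvd : P ^ Module.finrank K W ∣ P ^ p := pow_dvd_pow P (Module.finrank_le_of_rank_le hp)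
  have hzero := aeval_eq_zero_of_dvd_aeval_eq_zero hdvd (aeval_pow_finrank_eq_zero hroot)
  have hcoe := aeval_apply_of_intertwining (g := g.restrict hW) (φ := W.subtype) (fun _ => rfl)
    (P ^ p) ⟨w, hw⟩
  rwa [hzero, LinearMap.zero_apply, map_zero, eq_comm] at hcoe

end Endomorphism

/-- The Casimir element of an `sl₂`-triple, in the normalization without denominators. -/
def sl2Casimir {A : Type*} [Ring A] (h e f : A) : A := h ^ 2 + 2 * h + 4 * (f * e)

section Sl2

open Polynomial

attribute [local instance] LieRing.ofAssociativeRing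

theorem sl2Casimir_symm {A : Type*} [Ring A] {h e f : A} (t : IsSl2Triple h e f) :
    sl2Casimir (-h) f e = sl2Casimir h e f := by
  have hef : e * f = f * e + h := sub_eq_iff_eq_add'.1 t.lie_e_f
  rw [sl2Casimir, sl2Casimir, hef]
  noncomm_ring

theorem sl2Casimir_commute_e {A : Type*} [Ring A] {h e f : A} (t : IsSl2Triple h e f) :
    Commute (sl2Casimir h e f) e := by
  refine sub_eq_zero.1 ?_
  calc sl2Casimir h e f * e - e * sl2Casimir h e f
      = h * ⁅h, e⁆ + ⁅h, e⁆ * h + 2 * ⁅h, e⁆ - 4 * ⁅e, f⁆ * e := by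
        simp only [Ring.lie_def, sl2Casimir]
        noncomm_ring
    _ = 2 * (2 • e - (h * e - e * h)) := by
        rw [t.lie_e_f, t.lie_h_e_nsmul]
        noncomm_ring
    _ = 0 := by rw [← Ring.lie_def, t.lie_h_e_nsmul, sub_self, mul_zero]

theorem sl2Casimir_commute_h {A : Type*} [Ring A] {h e f : A} (t : IsSl2Triple h e f) :
    Commute (sl2Casimir h e f) h := by
  have hf : Commute (sl2Casimir h e f) f := sl2Casimir_symm t ▸ sl2Casimir_commute_e t.symm
  have he := sl2Casimir_commute_e t
  have hef := (he.mul_right hf).sub_right (hf.mul_right he)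
  rwa [← Ring.lie_def, t.lie_e_f] at hef

variable {K M : Type*} [Field K] [AddCommGroup M] [Module K M] {h e f : Module.End K M} {a κ : K}

/-- `a` and `κ` are simultaneous eigenvalues of `h` and of the Casimir operator. -/
def IsSl2Weight (h e f : Module.End K M) (a κ : K) : Prop :=
  ∃ w ≠ 0, h w = a • w ∧ sl2Casimir h e f w = κ • w

namespace IsSl2Weight

theorem neg (t : IsSl2Triple h e f) (H : IsSl2Weight h e f a κ) :
    IsSl2Weight (-h) f e (-a) κ := by
  obtain ⟨w, hw0, hw, hκ⟩ := H
  refine ⟨w, hw0, ?_, ?_⟩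
  · rw [LinearMap.neg_apply, hw, neg_smul]
  · rw [sl2Casimir_symm t, hκ]

theorem add_two (t : IsSl2Triple h e f) (H : IsSl2Weight h e f a κ) (hκ : κ ≠ a ^ 2 + 2 * a) :
    IsSl2Weight h e f (a + 2) κ := by
  obtain ⟨w, hw0, hw, hwκ⟩ := H
  have hew : e w ≠ 0 := fun hew => hκ <| smul_left_injective K hw0 <| by
    calc κ • w = h (h w) + 2 • h w + 4 • f (e w) := by
          rw [← hwκ, sl2Casimir, pow_two, ← Nat.cast_ofNat (n := 2), ← Nat.cast_ofNat (n := 4),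
            ← nsmul_eq_mul, ← nsmul_eq_mul]
          rfl
      _ = (a ^ 2 + 2 * a) • w := by
          rw [hew, map_zero, smul_zero, add_zero, hw, map_smul, hw]
          module
  have lie_apply : h (e w) - e (h w) = 2 • e w := LinearMap.congr_fun t.lie_h_e_nsmul w
  refine ⟨e w, hew, ?_, ?_⟩
  · rw [sub_eq_iff_eq_add'.1 lie_apply, hw, map_smul]
    module
  · rw [← Module.End.mul_apply, (sl2Casimir_commute_e t).eq, Module.End.mul_apply, hwκ, map_smul]

theorem forall_or_exists (t : IsSl2Triple h e f) (H : IsSl2Weight h e f a κ) :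
    (∀ n : ℕ, IsSl2Weight h e f (a + 2 * n) κ) ∨
      ∃ n : ℕ, (∀ k ≤ n, IsSl2Weight h e f (a + 2 * k) κ) ∧
        κ = (a + 2 * n) ^ 2 + 2 * (a + 2 * n) := by
  by_cases hκ : ∃ n : ℕ, κ = (a + 2 * n) ^ 2 + 2 * (a + 2 * n)
  · classical
    refine Or.inr ⟨Nat.find hκ, fun k => ?_, Nat.find_spec hκ⟩
    induction k with
    | zero => simpa using H
    | succ k ih =>
      intro hk
      convert (ih (by omega)).add_two t (Nat.find_min hκ hk) using 1
      push_cast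
      ring
  · push Not at hκ
    refine Or.inl fun n => ?_
    induction n with
    | zero => simpa using H
    | succ n ih =>
      convert ih.add_two t (hκ n) using 1
      push_cast
      ring

theorem forall_or_exists_sub (t : IsSl2Triple h e f) (H : IsSl2Weight h e f a κ) :
    (∀ n : ℕ, IsSl2Weight h e f (a - 2 * n) κ) ∨
      ∃ n : ℕ, (∀ k ≤ n, IsSl2Weight h e f (a - 2 * k) κ) ∧
        κ = (a - 2 * n) ^ 2 - 2 * (a - 2 * n) := by
  have of_neg (n : ℕ) (hn : IsSl2Weight (-h) f e (-a + 2 * n) κ) :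
      IsSl2Weight h e f (a - 2 * n) κ := by
    simpa [neg_add_eq_sub, neg_neg] using hn.neg t.symm
  refine ((H.neg t).forall_or_exists t.symm).imp (fun down n => of_neg n (down n)) ?_
  rintro ⟨n, down, hκ⟩
  exact ⟨n, fun k hk => of_neg k (down k hk), hκ.trans (by ring)⟩

theorem zero_or_one [CharZero K] {m n : ℕ}
    (up : ∀ k ≤ m, IsSl2Weight h e f (a + 2 * k) κ) (hm : κ = (a + 2 * m) ^ 2 + 2 * (a + 2 * m))
    (down : ∀ k ≤ n, IsSl2Weight h e f (a - 2 * k) κ)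
    (hn : κ = (a - 2 * n) ^ 2 - 2 * (a - 2 * n)) :
    IsSl2Weight h e f 0 κ ∨ IsSl2Weight h e f 1 κ := by
  have symmetric : a = n - m := by
    have hne : ((4 * (m + n + 1) : ℕ) : K) ≠ 0 := Nat.cast_ne_zero.2 (by omega)
    refine sub_eq_zero.1 ((mul_eq_zero.1 ?_).resolve_left hne)
    push_cast
    linear_combination hn - hm
  obtain hnm | hmn := le_total n m
  · obtain ⟨d, rfl⟩ := Nat.exists_eq_add_of_le hnm
    obtain ⟨i, rfl | rfl⟩ := d.even_or_odd'
    · refine Or.inl ?_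
      convert up i (by omega) using 1
      rw [symmetric]
      push_cast
      ring
    · refine Or.inr ?_
      convert up (i + 1) (by omega) using 1
      rw [symmetric]
      push_cast
      ring
  · obtain ⟨d, rfl⟩ := Nat.exists_eq_add_of_le hmn
    obtain ⟨i, rfl | rfl⟩ := d.even_or_odd'
    · refine Or.inl ?_
      convert down i (by omega) using 1
      rw [symmetric]
      push_cast
      ring
    · refine Or.inr ?_
      convert down i (by omega) using 1
      rw [symmetric]
      push_cast
      ring

theorem eventually_or [CharZero K] {m : ℤ} (t : IsSl2Triple h e f)
    (H : IsSl2Weight h e f (a + 2 * m) κ) :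
    (∀ᶠ n : ℤ in Filter.atTop, IsSl2Weight h e f (a + 2 * n) κ) ∨
      (∀ᶠ n : ℤ in Filter.atBot, IsSl2Weight h e f (a + 2 * n) κ) ∨
        IsSl2Weight h e f 0 κ ∨ IsSl2Weight h e f 1 κ := by
  obtain up | ⟨k, up, hk⟩ := H.forall_or_exists t
  · refine Or.inl (Filter.eventually_atTop.2 ⟨m, fun n hn => ?_⟩)
    obtain ⟨k, rfl⟩ := Int.le.dest hn
    convert up k using 1
    push_cast
    ring
  refine Or.inr ?_
  obtain down | ⟨l, down, hl⟩ := H.forall_or_exists_sub t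
  · refine Or.inl (Filter.eventually_atBot.2 ⟨m, fun n hn => ?_⟩)
    obtain ⟨k, rfl⟩ := Int.le.dest hn
    convert down k using 1
    push_cast
    ring
  exact Or.inr (zero_or_one up hk down hl)

end IsSl2Weight

theorem card_le_of_isSl2Weight {p : ℕ} {T : Finset K}
    (hp : Module.rank K (Module.End.eigenspace h a) ≤ p)
    (hT : ∀ κ ∈ T, IsSl2Weight h e f a κ) : T.card ≤ p := by
  choose! w hw0 hw hwκ using hT
  have independent : LinearIndependent K fun κ : T => w κ :=
    Module.End.eigenvectors_linearIndependent' (sl2Casimir h e f) _ Subtype.val_injective _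
      fun κ => ⟨Module.End.mem_eigenspace_iff.2 (hwκ κ κ.2), hw0 κ κ.2⟩
  have independent' : LinearIndependent K fun κ : T =>
      (⟨w κ, Module.End.mem_eigenspace_iff.2 (hw κ κ.2)⟩ : Module.End.eigenspace h a) :=
    .of_comp (Submodule.subtype _) independent
  have := independent'.cardinal_lift_le_rank.trans (Cardinal.lift_le.2 hp)
  simpa using this

theorem card_le_of_eventually_isSl2Weight {ι : Type*} {l : Filter ι} [l.NeBot] {b : ι → K} {p : ℕ}
    {T : Finset K} (hp : ∀ a, Module.rank K (Module.End.eigenspace h a) ≤ p)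
    (hT : ∀ κ ∈ T, ∀ᶠ i in l, IsSl2Weight h e f (b i) κ) : T.card ≤ p := by
  obtain ⟨i, hi⟩ := ((Filter.eventually_all_finset T).2 hT).exists
  exact card_le_of_isSl2Weight (hp _) hi

theorem card_le_of_exists_isSl2Weight [CharZero K] {p : ℕ} {T : Finset K} (t : IsSl2Triple h e f)
    (hp : ∀ a, Module.rank K (Module.End.eigenspace h a) ≤ p)
    (hT : ∀ κ ∈ T, ∃ n : ℤ, IsSl2Weight h e f (a + 2 * n) κ) : T.card ≤ 4 * p := by
  classical
  let T₁ := {κ ∈ T | ∀ᶠ n : ℤ in Filter.atTop, IsSl2Weight h e f (a + 2 * n) κ}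
  let T₂ := {κ ∈ T | ∀ᶠ n : ℤ in Filter.atBot, IsSl2Weight h e f (a + 2 * n) κ}
  let T₃ := {κ ∈ T | IsSl2Weight h e f 0 κ}
  let T₄ := {κ ∈ T | IsSl2Weight h e f 1 κ}
  have cover : T ⊆ T₁ ∪ (T₂ ∪ (T₃ ∪ T₄)) := fun κ hκ => by
    obtain ⟨n, hn⟩ := hT κ hκ
    simpa only [T₁, T₂, T₃, T₄, Finset.mem_union, Finset.mem_filter, hκ, true_and]
      using hn.eventually_or t
  have card₁ : T₁.card ≤ p :=
    card_le_of_eventually_isSl2Weight hp fun κ hκ => (Finset.mem_filter.1 hκ).2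
  have card₂ : T₂.card ≤ p :=
    card_le_of_eventually_isSl2Weight hp fun κ hκ => (Finset.mem_filter.1 hκ).2
  have card₃ : T₃.card ≤ p := card_le_of_isSl2Weight (hp 0) fun κ hκ => (Finset.mem_filter.1 hκ).2
  have card₄ : T₄.card ≤ p := card_le_of_isSl2Weight (hp 1) fun κ hκ => (Finset.mem_filter.1 hκ).2
  have h₁ := Finset.card_union_le T₁ (T₂ ∪ (T₃ ∪ T₄))
  have h₂ := Finset.card_union_le T₂ (T₃ ∪ T₄)
  have h₃ := Finset.card_union_le T₃ T₄
  have := Finset.card_le_card cover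
  omega

theorem exists_monic_aeval_sl2Casimir [CharZero K] [IsAlgClosed K] {p : ℕ} (t : IsSl2Triple h e f)
    (hp : ∀ a, Module.rank K (Module.End.eigenspace h a) ≤ p) (a : K) :
    ∃ P : K[X], P.Monic ∧ P.natDegree ≤ 4 * p * p ∧
      ∀ n : ℤ, ∀ w ∈ Module.End.eigenspace h (a + 2 * n), aeval (sl2Casimir h e f) P w = 0 := by
  let S := {κ : K | ∃ n : ℤ, IsSl2Weight h e f (a + 2 * n) κ}
  have hS : S.Finite := by
    by_contra hinf
    obtain ⟨T, hT, hcard⟩ := Set.Infinite.exists_subset_card_eq hinf (4 * p + 1)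
    have := card_le_of_exists_isSl2Weight t hp fun κ hκ => hT hκ
    omega
  have hcard : hS.toFinset.card ≤ 4 * p :=
    card_le_of_exists_isSl2Weight t hp fun κ hκ => hS.mem_toFinset.1 hκ
  let Q : K[X] := ∏ κ ∈ hS.toFinset, (X - C κ)
  refine ⟨Q ^ p, (monic_prod_X_sub_C _ _).pow p, ?_, fun n w hw => ?_⟩
  · rw [natDegree_pow, natDegree_finsetProd_X_sub_C_eq_card, mul_comm]
    exact Nat.mul_le_mul_right p hcard
  · refine aeval_pow_apply_eq_zero_of_rank_le (hp _) ?_ ?_ hw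
    · exact Module.End.mapsTo_genEigenspace_of_comm (sl2Casimir_commute_h t).symm _ 1
    · intro κ w hw hw0 hκ
      rw [IsRoot, eval_prod]
      exact Finset.prod_eq_zero
        (hS.mem_toFinset.2 ⟨n, w, hw0, Module.End.mem_eigenspace_iff.1 hw, hκ⟩) (by simp)

end Sl2

/-! ### Projective representations of the Witt algebra -/

section WordFiltration

open Polynomial

variable (K : Type*) {A : Type*} [Field K] [Ring A] [Algebra K A] (L : ℤ → A)

/-- A projective representation of the Witt algebra in an associative algebra: the Witt brackets
hold up to scalars. -/
def IsProjWitt : Prop :=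
  ∀ m n : ℤ, ∃ c : K, ⁅L m, L n⁆ = ((n : K) - m) • L (m + n) + c • 1

/-- The filtration of the algebra generated by the `L j` by the length of words. -/
def wordSpan (m : ℕ) : Submodule K A :=
  span K ((fun l : List ℤ => (l.map L).prod) '' {l | l.length ≤ m})

/-- The Rees algebra of the filtration `wordSpan`. The polynomial variable records the degree, and
at the same time it is the element whose vanishing defines the associated graded algebra. -/
noncomputable def wordRees : Subalgebra K A[X] :=
  Algebra.adjoin K (insert X (Set.range fun j => monomial 1 (L j)))

variable {K L}

theorem word_mem_wordSpan {m : ℕ} {l : List ℤ} (hl : l.length ≤ m) :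
    (l.map L).prod ∈ wordSpan K L m :=
  subset_span ⟨l, hl, rfl⟩

theorem mul_mem_wordSpan {m n : ℕ} {a b : A} (ha : a ∈ wordSpan K L m) (hb : b ∈ wordSpan K L n) :
    a * b ∈ wordSpan K L (m + n) := by
  have hle : wordSpan K L m * wordSpan K L n ≤ wordSpan K L (m + n) := by
    rw [wordSpan, wordSpan, Submodule.span_mul_span, Submodule.span_le]
    rintro _ ⟨_, ⟨l, hl, rfl⟩, _, ⟨l', hl', rfl⟩, rfl⟩
    simpa using word_mem_wordSpan (K := K) (L := L) (l := l ++ l') (m := m + n)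
      (by simpa using add_le_add hl hl')
  exact hle (Submodule.mul_mem_mul ha hb)

theorem coeff_mem_wordSpan {P : A[X]} (hP : P ∈ wordRees K L) (m : ℕ) :
    P.coeff m ∈ wordSpan K L m := by
  have h1 (m : ℕ) : (1 : A) ∈ wordSpan K L m :=
    word_mem_wordSpan (l := []) m.zero_le
  induction hP using Algebra.adjoin_induction generalizing m with
  | mem P hP =>
    obtain rfl | ⟨j, rfl⟩ := hP
    · rw [coeff_X]
      split_ifs
      exacts [h1 m, zero_mem _]
    · rw [coeff_monomial]
      split_ifs with hm
      · simpa using word_mem_wordSpan (K := K) (L := L) (l := [j]) hm.le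
      · exact zero_mem _
  | algebraMap r =>
    rw [Polynomial.algebraMap_apply, coeff_C, Algebra.algebraMap_eq_smul_one]
    split_ifs
    exacts [smul_mem _ r (h1 m), zero_mem _]
  | add P Q _ _ hP hQ => exact add_mem (hP m) (hQ m)
  | mul P Q _ _ hP hQ =>
    rw [coeff_mul]
    refine sum_mem fun ij hij => ?_
    rw [← Finset.HasAntidiagonal.mem_antidiagonal.1 hij]
    exact mul_mem_wordSpan (hP _) (hQ _)

variable (K L) in
/-- The element of degree one in the Rees algebra given by `1 ∈ wordSpan 1`. -/
noncomputable def reesT : wordRees K L := ⟨X, Algebra.subset_adjoin (Set.mem_insert _ _)⟩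

variable (K L) in
/-- The element of degree one in the Rees algebra given by `L j ∈ wordSpan 1`. -/
noncomputable def reesGen (j : ℤ) : wordRees K L :=
  ⟨monomial 1 (L j), Algebra.subset_adjoin (Set.mem_insert_of_mem _ ⟨j, rfl⟩)⟩

theorem reesT_mul_comm (P : wordRees K L) : reesT K L * P = P * reesT K L :=
  Subtype.ext (X_mul (p := (P : A[X])))

instance isTwoSided_span_reesT : (Ideal.span {reesT K L}).IsTwoSided where
  mul_mem_of_left b ha := by
    obtain ⟨r, rfl⟩ := Ideal.mem_span_singleton'.1 ha
    exact Ideal.mem_span_singleton'.2 ⟨r * b, by rw [mul_assoc, ← reesT_mul_comm, mul_assoc]⟩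

variable (K L) in
/-- The associated graded algebra of the filtration `wordSpan`, as a quotient of the Rees
algebra. -/
abbrev WordGr := wordRees K L ⧸ Ideal.span {reesT K L}

variable (K L) in
/-- The projection of the Rees algebra onto the associated graded algebra. -/
noncomputable abbrev toWordGr : wordRees K L →ₐ[K] WordGr K L :=
  Ideal.Quotient.mkₐ K (Ideal.span {reesT K L})

theorem toWordGr_eq_zero_iff {P : wordRees K L} :
    toWordGr K L P = 0 ↔ ∃ Q, Q * reesT K L = P :=
  Ideal.Quotient.eq_zero_iff_mem.trans Ideal.mem_span_singleton'

theorem toWordGr_reesT : toWordGr K L (reesT K L) = 0 :=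
  toWordGr_eq_zero_iff.2 ⟨1, one_mul _⟩

theorem lie_C_monomial (a b : A) (n : ℕ) : ⁅C a, monomial n b⁆ = monomial n ⁅a, b⁆ := by
  simp [Ring.lie_def, C_mul_monomial, monomial_mul_C]

theorem lie_C_X (a : A) : ⁅C a, (X : A[X])⁆ = 0 := by
  rw [Ring.lie_def, X_mul_C, sub_self]

namespace IsProjWitt

variable (hL : IsProjWitt K L)
include hL

theorem lie_C_reesGen (a j : ℤ) : ∃ c : K, ⁅C (L a), (reesGen K L j : A[X])⁆ =
    (((j : K) - a) • reesGen K L (a + j) + c • reesT K L : wordRees K L) := by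
  obtain ⟨c, hc⟩ := hL a j
  refine ⟨c, ?_⟩
  simp only [reesGen, reesT, lie_C_monomial, hc, Subalgebra.coe_add, Subalgebra.coe_smul,
    map_add, ← smul_monomial, monomial_one_one_eq_X]

theorem lie_C_mem_wordRees (a : ℤ) {P : A[X]} (hP : P ∈ wordRees K L) :
    ⁅C (L a), P⁆ ∈ wordRees K L := by
  induction hP using Algebra.adjoin_induction with
  | mem P hP =>
    obtain rfl | ⟨j, rfl⟩ := hP
    · simp only [lie_C_X, zero_mem]
    · obtain ⟨c, hc⟩ := hL.lie_C_reesGen a j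
      exact hc ▸ SetLike.coe_mem _
  | algebraMap r =>
    rw [Ring.lie_def, Algebra.commutes, sub_self]
    exact zero_mem _
  | add P Q _ _ hP hQ =>
    have additive : ⁅C (L a), P + Q⁆ = ⁅C (L a), P⁆ + ⁅C (L a), Q⁆ := by
      simp only [Ring.lie_def]
      noncomm_ring
    exact additive ▸ add_mem hP hQ
  | mul P Q hP hQ ihP ihQ =>
    have leibniz : ⁅C (L a), P * Q⁆ = ⁅C (L a), P⁆ * Q + P * ⁅C (L a), Q⁆ := by
      simp only [Ring.lie_def]
      noncomm_ring
    rw [leibniz]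
    exact add_mem (mul_mem ihP hQ) (mul_mem hP ihQ)

/-- The derivation of the Rees algebra induced by the commutator with `L a`. -/
noncomputable def reesAd (a : ℤ) (P : wordRees K L) : wordRees K L :=
  ⟨⁅C (L a), (P : A[X])⁆, hL.lie_C_mem_wordRees a P.2⟩

theorem reesAd_add (a : ℤ) (P Q : wordRees K L) :
    hL.reesAd a (P + Q) = hL.reesAd a P + hL.reesAd a Q := by
  refine Subtype.ext ?_
  simp only [reesAd, Ring.lie_def, Subalgebra.coe_add]
  noncomm_ring

theorem reesAd_mul (a : ℤ) (P Q : wordRees K L) :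
    hL.reesAd a (P * Q) = hL.reesAd a P * Q + P * hL.reesAd a Q := by
  refine Subtype.ext ?_
  simp only [reesAd, Ring.lie_def, Subalgebra.coe_mul, Subalgebra.coe_add]
  noncomm_ring

theorem reesAd_algebraMap (a : ℤ) (r : K) : hL.reesAd a (algebraMap K _ r) = 0 :=
  Subtype.ext ((Ring.lie_def _ _).trans (sub_eq_zero.2 (Algebra.commutes r _).symm))

theorem reesAd_reesT (a : ℤ) : hL.reesAd a (reesT K L) = 0 :=
  Subtype.ext (lie_C_X (L a))

theorem toWordGr_reesAd_reesGen (a j : ℤ) : toWordGr K L (hL.reesAd a (reesGen K L j)) =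
    ((j : K) - a) • toWordGr K L (reesGen K L (a + j)) := by
  obtain ⟨c, hc⟩ := hL.lie_C_reesGen a j
  rw [show hL.reesAd a (reesGen K L j) = _ from Subtype.ext hc, map_add, map_smul, map_smul,
    toWordGr_reesT, smul_zero, add_zero]

theorem lie_reesGen (a : ℤ) (P : wordRees K L) :
    ⁅reesGen K L a, P⁆ = hL.reesAd a P * reesT K L := by
  refine Subtype.ext ?_
  simp only [reesAd, reesGen, reesT, Ring.lie_def, Subalgebra.coe_sub, Subalgebra.coe_mul,
    ← C_mul_X_eq_monomial, sub_mul, mul_assoc, X_mul]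

theorem wordGr_mul_comm (x y : WordGr K L) : x * y = y * x := by
  have hcomm (P : wordRees K L) : toWordGr K L P ∈ Subalgebra.center K (WordGr K L) := by
    obtain ⟨P, hP⟩ := P
    induction hP using Algebra.adjoin_induction with
    | mem P hP =>
      obtain rfl | ⟨j, rfl⟩ := hP
      · exact toWordGr_reesT (K := K) (L := L) ▸ zero_mem _
      · refine Subalgebra.mem_center_iff.2 fun y => ?_
        obtain ⟨Q, rfl⟩ := Ideal.Quotient.mk_surjective y
        refine (sub_eq_zero.1 ?_).symm
        exact toWordGr_eq_zero_iff.2 ⟨_, (hL.lie_reesGen j Q).symm⟩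
    | algebraMap r => exact algebraMap_mem _ r
    | add P Q _ _ hP hQ => exact add_mem hP hQ
    | mul P Q _ _ hP hQ => exact mul_mem hP hQ
  obtain ⟨P, rfl⟩ := Ideal.Quotient.mk_surjective x
  exact (Subalgebra.mem_center_iff.1 (hcomm P) y).symm

/-- The associated graded algebra of a projective representation is commutative. -/
noncomputable abbrev commRingWordGr : CommRing (WordGr K L) :=
  { (inferInstance : Ring (WordGr K L)) with mul_comm := hL.wordGr_mul_comm }

/-- The map from the symmetric algebra of the Witt algebra to the associated graded algebra. -/
noncomputable def symbolMap : MvPolynomial ℤ K →ₐ[K] WordGr K L :=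
  letI := hL.commRingWordGr
  MvPolynomial.aeval fun j => toWordGr K L (reesGen K L j)

theorem symbolMap_X (j : ℤ) : hL.symbolMap (MvPolynomial.X j) = toWordGr K L (reesGen K L j) :=
  letI := hL.commRingWordGr
  MvPolynomial.aeval_X _ j

theorem exists_toWordGr_eq_symbolMap (a : ℤ) (f : MvPolynomial ℤ K) :
    ∃ P, toWordGr K L P = hL.symbolMap f ∧
      toWordGr K L (hL.reesAd a P) = hL.symbolMap (wittDer K a f) := by
  induction f using MvPolynomial.induction_on with
  | C r =>
    refine ⟨algebraMap K _ r, ?_, ?_⟩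
    · exact ((toWordGr K L).commutes r).trans (hL.symbolMap.commutes r).symm
    · rw [hL.reesAd_algebraMap, MvPolynomial.derivation_C, map_zero, map_zero]
  | add f g hf hg =>
    obtain ⟨P, hP, hP'⟩ := hf
    obtain ⟨Q, hQ, hQ'⟩ := hg
    exact ⟨P + Q, by simp only [map_add, hP, hQ], by simp only [hL.reesAd_add, map_add, hP', hQ']⟩
  | mul_X f j hf =>
    obtain ⟨P, hP, hP'⟩ := hf
    refine ⟨P * reesGen K L j, by rw [map_mul, map_mul, hP, hL.symbolMap_X], ?_⟩
    rw [hL.reesAd_mul, map_add, map_mul, map_mul, hP, hP', hL.toWordGr_reesAd_reesGen,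
      Derivation.leibniz, wittDer_X, map_add, smul_eq_mul, smul_eq_mul, map_mul, map_mul, map_smul,
      hL.symbolMap_X, hL.symbolMap_X, add_comm, hL.wordGr_mul_comm (hL.symbolMap (wittDer K a f))]

theorem isPoissonIdeal_ker_symbolMap : IsPoissonIdeal (RingHom.ker hL.symbolMap) := by
  intro a f hf
  obtain ⟨P, hP, hP'⟩ := hL.exists_toWordGr_eq_symbolMap a f
  obtain ⟨Q, rfl⟩ := toWordGr_eq_zero_iff.1 (hP.trans hf)
  rw [RingHom.mem_ker, ← hP', hL.reesAd_mul, hL.reesAd_reesT, mul_zero, add_zero]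
  exact toWordGr_eq_zero_iff.2 ⟨_, rfl⟩

end IsProjWitt

end WordFiltration

section WordReduction

open Polynomial

variable {K A : Type*} [Field K] [Ring A] [Algebra K A] {L : ℤ → A}

namespace IsProjWitt

theorem exists_monomial_sl2Casimir_eq (hL : IsProjWitt K L) : ∃ y : wordRees K L,
    (y : A[X]) = monomial 2 (sl2Casimir (2 * L 0) (L 1) (-L (-1))) ∧
      toWordGr K L y = hL.symbolMap (4 * casimirSymbol K 1) := by
  refine ⟨4 * (reesGen K L 0 ^ 2 + reesGen K L 0 * reesT K L -
    reesGen K L (-1) * reesGen K L 1), ?_, ?_⟩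
  · have hcas : sl2Casimir (2 * L 0) (L 1) (-L (-1)) =
        (4 : A) * (L 0 ^ 2 + L 0 - L (-1) * L 1) := by
      rw [sl2Casimir]
      noncomm_ring
    have h4 (a : A) : (4 : A[X]) * monomial 2 a = monomial 2 (4 * a) := by
      rw [← C_mul_monomial, map_ofNat]
    simp only [hcas, reesGen, reesT, Subalgebra.coe_mul, Subalgebra.coe_sub, Subalgebra.coe_add,
      pow_two, monomial_mul_monomial, monomial_mul_X, ← h4, map_sub, map_add]
    rfl
  · rw [map_mul, map_sub, map_add, map_mul (toWordGr K L) _ (reesT K L), toWordGr_reesT,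
      mul_zero, add_zero]
    simp only [casimirSymbol, map_sub, map_mul, map_pow, hL.symbolMap_X, map_ofNat]
    rw [hL.wordGr_mul_comm (toWordGr K L (reesGen K L 1))]

theorem casimirSymbol_pow_mem_ker_symbolMap [CharZero K] (hL : IsProjWitt K L) {P : K[X]}
    (hP : P.Monic) (h : aeval (sl2Casimir (2 * L 0) (L 1) (-L (-1))) P = 0) :
    casimirSymbol K 1 ^ P.natDegree ∈ RingHom.ker hL.symbolMap := by
  obtain ⟨y, coe_y, symbol_y⟩ := hL.exists_monomial_sl2Casimir_eq
  -- The homogenization of `P` vanishes at `(y, t ^ 2)`; modulo `t` only its leading term survives.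
  have homogenized : ∑ i ∈ Finset.range (P.natDegree + 1),
      P.coeff i • (y ^ i * reesT K L ^ (2 * (P.natDegree - i))) = 0 := by
    refine Subtype.ext ?_
    have term (i : ℕ) (hi : i ∈ Finset.range (P.natDegree + 1)) :
        P.coeff i • ((y : A[X]) ^ i * X ^ (2 * (P.natDegree - i))) = monomial (2 * P.natDegree)
          (P.coeff i • sl2Casimir (2 * L 0) (L 1) (-L (-1)) ^ i) := by
      have : 2 * i + 2 * (P.natDegree - i) = 2 * P.natDegree := by
        have := Finset.mem_range.1 hi
        omega
      rw [coe_y, monomial_pow, monomial_mul_X_pow, this, smul_monomial]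
    rw [aeval_eq_sum_range] at h
    simp only [AddSubmonoidClass.coe_finsetSum, Subalgebra.coe_smul, Subalgebra.coe_mul,
      Subalgebra.coe_pow, reesT, Finset.sum_congr rfl term, ← map_sum, h, map_zero,
      ZeroMemClass.coe_zero]
  have leading := congrArg (toWordGr K L) homogenized
  have lower (i : ℕ) (hi : i ∈ Finset.range P.natDegree) :
      toWordGr K L (P.coeff i • (y ^ i * reesT K L ^ (2 * (P.natDegree - i)))) = 0 := by
    have := Finset.mem_range.1 hi
    rw [map_smul, map_mul, map_pow _ (reesT K L), toWordGr_reesT, zero_pow (by omega), mul_zero,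
      smul_zero]
  rw [Finset.sum_range_succ, map_add, map_sum, Finset.sum_eq_zero lower, zero_add, map_zero,
    hP.coeff_natDegree, one_smul, Nat.sub_self, mul_zero, pow_zero, mul_one, map_pow,
    symbol_y, ← map_pow, mul_pow] at leading
  refine mem_ideal_of_smul_mem (c := (4 : K) ^ P.natDegree)
    (pow_ne_zero _ (OfNat.ofNat_ne_zero 4)) ?_
  rwa [MvPolynomial.smul_eq_C_mul, map_pow, map_ofNat]

theorem prod_map_X_mem_idealOfVars_pow (l : List ℤ) :
    (l.map (MvPolynomial.X (R := K))).prod ∈ MvPolynomial.idealOfVars ℤ K ^ l.length := by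
  induction l with
  | nil => exact Submodule.one_le.1 le_rfl
  | cons j l ih =>
    rw [List.map_cons, List.prod_cons, List.length_cons, pow_succ']
    exact Ideal.mul_mem_mul (Ideal.subset_span ⟨j, rfl⟩) ih

theorem coe_prod_map_reesGen (l : List ℤ) :
    ((l.map (reesGen K L)).prod : A[X]) = monomial l.length (l.map L).prod := by
  induction l with
  | nil => rfl
  | cons j l ih =>
    rw [List.map_cons, List.prod_cons, Subalgebra.coe_mul, ih, reesGen, monomial_mul_monomial,
      List.map_cons, List.prod_cons, List.length_cons, add_comm]

theorem toWordGr_prod_map_reesGen (hL : IsProjWitt K L) (l : List ℤ) :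
    toWordGr K L (l.map (reesGen K L)).prod =
      hL.symbolMap (l.map (MvPolynomial.X (R := K))).prod := by
  simp only [map_list_prod, List.map_map, Function.comp_def, hL.symbolMap_X]

theorem exists_prod_eq_mul_add (hL : IsProjWitt K L) {m : ℕ}
    (hm : MvPolynomial.idealOfVars ℤ K ^ (m + 1) ≤
      RingHom.ker hL.symbolMap ⊔ Ideal.span {MvPolynomial.X 0})
    {l : List ℤ} (hl : l.length = m + 1) :
    ∃ a ∈ wordSpan K L m, ∃ b ∈ wordSpan K L m, (l.map L).prod = a * L 0 + b := by
  obtain ⟨f, hf, g, hg, hfg⟩ :=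
    Submodule.mem_sup.1 (hm (hl ▸ prod_map_X_mem_idealOfVars_pow (K := K) l))
  obtain ⟨g, rfl⟩ := Ideal.mem_span_singleton'.1 hg
  obtain ⟨P, hP : toWordGr K L P = _⟩ := Ideal.Quotient.mk_surjective (hL.symbolMap g)
  have symbol_eq : toWordGr K L ((l.map (reesGen K L)).prod - P * reesGen K L 0) = 0 := by
    rw [map_sub (toWordGr K L), sub_eq_zero, map_mul, hP, ← hL.symbolMap_X, ← map_mul,
      hL.toWordGr_prod_map_reesGen, ← hfg, map_add, RingHom.mem_ker.1 hf, zero_add]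
  obtain ⟨Q, hQ⟩ := toWordGr_eq_zero_iff.1 symbol_eq
  refine ⟨_, coeff_mem_wordSpan P.2 m, _, coeff_mem_wordSpan Q.2 m, ?_⟩
  have degree_eq := congrArg (fun R : wordRees K L => (R : A[X]).coeff (m + 1)) hQ
  simp only [Subalgebra.coe_sub, Subalgebra.coe_mul, coe_prod_map_reesGen, reesT, reesGen,
    ← C_mul_X_eq_monomial, ← mul_assoc, coeff_sub, coeff_mul_X, coeff_mul_C, coeff_monomial, hl,
    if_true] at degree_eq
  rw [degree_eq, add_sub_cancel]

end IsProjWitt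

end WordReduction

section WordApply

variable {K M : Type*} [Field K] [AddCommGroup M] [Module K M] {L : ℤ → Module.End K M}

theorem IsProjWitt.apply_mem_map_wordSpan (hL : IsProjWitt K L) {m : ℕ}
    (hm : MvPolynomial.idealOfVars ℤ K ^ (m + 1) ≤
      RingHom.ker hL.symbolMap ⊔ Ideal.span {MvPolynomial.X 0})
    {μ : K} {v : M} (hv : L 0 v = μ • v) (j : ℤ) {w : M}
    (hw : w ∈ (wordSpan K L m).map (LinearMap.applyₗ v)) :
    L j w ∈ (wordSpan K L m).map (LinearMap.applyₗ v) := by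
  rw [wordSpan, Submodule.map_span] at hw
  refine (Submodule.span_le (p := ((wordSpan K L m).map (LinearMap.applyₗ v)).comap (L j))).2 ?_ hw
  rintro _ ⟨_, ⟨l, hl : l.length ≤ m, rfl⟩, rfl⟩
  change L j ((l.map L).prod v) ∈ (wordSpan K L m).map (LinearMap.applyₗ v)
  rw [← Module.End.mul_apply, ← List.prod_cons, ← List.map_cons]
  obtain hlt | rfl := hl.lt_or_eq
  · exact Submodule.mem_map_of_mem (word_mem_wordSpan (l := j :: l) hlt)
  · obtain ⟨a, ha, b, hb, hab⟩ := hL.exists_prod_eq_mul_add hm (List.length_cons (a := j))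
    refine ⟨μ • a + b, add_mem (smul_mem _ μ ha) hb, ?_⟩
    rw [hab, LinearMap.applyₗ_apply_apply, LinearMap.add_apply, LinearMap.add_apply,
      Module.End.mul_apply, hv, map_smul, LinearMap.smul_apply]

end WordApply

/-! ### Virasoro modules -/

namespace VirRep

attribute [local instance] LieRing.ofAssociativeRing

variable {V : Type} [AddCommGroup V] [Module ℂ V] {ρ : VirRep V} {W : Submodule ℂ V}

theorem mem_wt {μ : ℂ} {v : V} : v ∈ ρ.wt μ ↔ ρ.L 0 v = μ • v := Module.End.mem_eigenspace_iff

theorem lie_L (m n : ℤ) : ⁅ρ.L m, ρ.L n⁆ = ((n : ℂ) - m) • ρ.L (m + n) +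
    ((1 / 12 : ℂ) * ((n : ℂ) ^ 3 - n) * (if m + n = 0 then 1 else 0) * ρ.c₀) • 1 :=
  LinearMap.ext (ρ.rel_LL m n)

theorem isSl2Triple (h0 : ρ.L 0 ≠ 0) : IsSl2Triple (2 * ρ.L 0) (ρ.L 1) (-ρ.L (-1)) where
  h_ne_zero := by rwa [two_mul, ← two_smul ℂ, smul_ne_zero_iff_right two_ne_zero]
  lie_e_f := by
    rw [lie_neg, lie_L, two_mul]
    norm_num
    module
  lie_h_e_nsmul := by
    rw [two_mul, add_lie, lie_L, two_nsmul]
    norm_num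
  lie_h_f_nsmul := by
    rw [two_mul, add_lie, lie_neg, lie_L, two_nsmul]
    norm_num

theorem eigenspace_two_mul_L_zero (a : ℂ) :
    Module.End.eigenspace (2 * ρ.L 0) a = ρ.wt (a / 2) := by
  ext v
  rw [mem_wt, Module.End.mem_eigenspace_iff, two_mul, LinearMap.add_apply, ← two_smul ℂ,
    div_eq_inv_mul, mul_smul, eq_inv_smul_iff₀ two_ne_zero]

theorem L_mem_wt {μ : ℂ} {v : V} (hv : v ∈ ρ.wt μ) (n : ℤ) : ρ.L n v ∈ ρ.wt (μ + n) := by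
  have h := ρ.rel_LL 0 n v
  rw [mem_wt] at hv ⊢
  rw [hv, map_smul, sub_eq_iff_eq_add, zero_add] at h
  rw [h]
  split_ifs with hn
  · subst hn
    simp
  · simp only [Int.cast_zero]
    module

variable (ρ) in
/-- The sum of the weight spaces with weights in the coset `μ + ℤ`, a submodule containing
`ρ.wt μ`. -/
def wtCoset (μ : ℂ) : Submodule ℂ V := ⨆ n : ℤ, ρ.wt (μ + n)

theorem isSubmod_wtCoset (μ : ℂ) : ρ.IsSubmod (ρ.wtCoset μ) := by
  intro m v hv
  refine (iSup_le fun n w hw => ?_ : ρ.wtCoset μ ≤ (ρ.wtCoset μ).comap (ρ.L m)) hv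
  rw [Submodule.mem_comap]
  refine le_iSup (fun n : ℤ => ρ.wt (μ + n)) (n + m) ?_
  rw [Int.cast_add, ← add_assoc]
  exact L_mem_wt hw m

theorem wt_le_wtCoset (μ : ℂ) : ρ.wt μ ≤ ρ.wtCoset μ := by
  refine le_trans (le_of_eq ?_) (le_iSup (fun n : ℤ => ρ.wt (μ + n)) 0)
  rw [Int.cast_zero, add_zero]

theorem exists_monic_aeval_wtCoset {p : ℕ} (hp : ∀ μ, Module.rank ℂ (ρ.wt μ) ≤ p)
    (h0 : ρ.L 0 ≠ 0) (μ : ℂ) : ∃ P : Polynomial ℂ, P.Monic ∧ P.natDegree ≤ 4 * p * p ∧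
      ∀ w ∈ ρ.wtCoset μ,
        Polynomial.aeval (sl2Casimir (2 * ρ.L 0) (ρ.L 1) (-ρ.L (-1))) P w = 0 := by
  obtain ⟨P, hP, hdeg, hzero⟩ := exists_monic_aeval_sl2Casimir (isSl2Triple h0)
    (fun a => eigenspace_two_mul_L_zero (ρ := ρ) a ▸ hp (a / 2)) (2 * μ)
  refine ⟨P, hP, hdeg, fun w hw => ?_⟩
  refine (iSup_le fun n w hw => ?_ : ρ.wtCoset μ ≤ LinearMap.ker (Polynomial.aeval _ P)) hw
  refine hzero n w ?_
  rwa [eigenspace_two_mul_L_zero, ← mul_add, mul_div_cancel_left₀ _ two_ne_zero]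

/-- The action of the `L j` on an invariant subspace. -/
def restrictL (hW : ρ.IsSubmod W) (j : ℤ) : Module.End ℂ W := (ρ.L j).restrict (hW j)

theorem isProjWitt_restrictL (hW : ρ.IsSubmod W) : IsProjWitt ℂ (restrictL hW) :=
  fun m n => ⟨_, LinearMap.ext fun w => Subtype.ext (ρ.rel_LL m n w)⟩

theorem aeval_sl2Casimir_restrictL_eq_zero (hW : ρ.IsSubmod W) {P : Polynomial ℂ}
    (hP : ∀ w ∈ W, Polynomial.aeval (sl2Casimir (2 * ρ.L 0) (ρ.L 1) (-ρ.L (-1))) P w = 0) :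
    Polynomial.aeval
      (sl2Casimir (2 * restrictL hW 0) (restrictL hW 1) (-restrictL hW (-1))) P = 0 := by
  ext w
  exact (aeval_apply_of_intertwining (φ := W.subtype) (fun _ => rfl) P w).trans (hP w w.2)

theorem exists_idealOfVars_pow_le_ker_symbolMap_sup (p : ℕ) :
    ∃ m, ∀ {V : Type} [AddCommGroup V] [Module ℂ V] (ρ : VirRep V),
      (∀ μ, Module.rank ℂ (ρ.wt μ) ≤ p) → ρ.L 0 ≠ 0 → ∀ μ,
        MvPolynomial.idealOfVars ℤ ℂ ^ m ≤
          RingHom.ker (isProjWitt_restrictL (ρ.isSubmod_wtCoset μ)).symbolMap ⊔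
            Ideal.span {MvPolynomial.X 0} := by
  obtain ⟨m, hm⟩ := exists_idealOfVars_pow_le ℂ (4 * p * p)
  refine ⟨m, fun ρ hp h0 μ => hm _ (IsProjWitt.isPoissonIdeal_ker_symbolMap _) ?_⟩
  obtain ⟨P, hP, hdeg, hzero⟩ := exists_monic_aeval_wtCoset hp h0 μ
  exact Ideal.pow_mem_of_pow_mem _ (IsProjWitt.casimirSymbol_pow_mem_ker_symbolMap _ hP
    (aeval_sl2Casimir_restrictL_eq_zero _ hzero)) hdeg

theorem genBy_le {v : V} (hW : ρ.IsSubmod W) (hv : v ∈ W) : ρ.genBy v ≤ W := by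
  have virpow_subset (k : ℕ) : ρ.virpow k {v} ⊆ W := by
    induction k with
    | zero => simpa [virpow] using hv
    | succ k ih =>
      rintro _ ⟨n, u, hu, rfl⟩
      exact hW n u (ih hu)
  exact Submodule.span_le.2 (Set.iUnion_subset virpow_subset)

theorem coe_prod_restrictL_mem_virpow (hW : ρ.IsSubmod W) (v : W) (l : List ℤ) :
    ((l.map (restrictL hW)).prod v : V) ∈ ρ.virpow l.length {(v : V)} := by
  induction l with
  | nil => rfl
  | cons j l ih => exact ⟨j, _, ih, rfl⟩

theorem coe_apply_mem_span_virpow (hW : ρ.IsSubmod W) {μ : ℂ} (hμ : μ ≠ 0) {v : W}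
    (hv : (v : V) ∈ ρ.wt μ) {m : ℕ} {a : Module.End ℂ W}
    (ha : a ∈ wordSpan ℂ (restrictL hW) m) :
    (a v : V) ∈ span ℂ (⋃ k ∈ Finset.Icc 1 (m + 1), ρ.virpow k {(v : V)}) := by
  refine (span_le (p := (span ℂ _).comap (W.subtype ∘ₗ LinearMap.applyₗ v))).2 ?_ ha
  rintro _ ⟨l, hl : l.length ≤ m, rfl⟩
  have virpow_subset {k : ℕ} (hk : 1 ≤ k) (hkm : k ≤ m + 1) :
      ρ.virpow k {(v : V)} ⊆ span ℂ (⋃ k ∈ Finset.Icc 1 (m + 1), ρ.virpow k {(v : V)}) :=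
    (Set.subset_biUnion_of_mem (u := fun k => ρ.virpow k {(v : V)})
      (Finset.mem_Icc.2 ⟨hk, hkm⟩)).trans subset_span
  obtain rfl | hl0 := eq_or_ne l []
  · have hmem := smul_mem _ μ⁻¹ (virpow_subset le_rfl (by omega) ⟨0, (v : V), rfl, rfl⟩)
    rwa [mem_wt.1 hv, inv_smul_smul₀ hμ] at hmem
  · exact virpow_subset (List.length_pos_iff.2 hl0) (by omega)
      (coe_prod_restrictL_mem_virpow hW v l)

end VirRep

theorem stmt5_general (p : ℕ) :
    ∃ m, 0 < m ∧ ∀ {V : Type} [AddCommGroup V] [Module ℂ V] (ρ : VirRep V),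
      (∀ μ, Module.rank ℂ (ρ.wt μ) ≤ p) → ∀ μ ≠ 0, ∀ v ∈ ρ.wt μ, v ≠ 0 →
        ρ.genBy v ≤ span ℂ (⋃ k ∈ Finset.Icc 1 m, ρ.virpow k {v}) := by
  obtain ⟨m, hm⟩ := VirRep.exists_idealOfVars_pow_le_ker_symbolMap_sup p
  refine ⟨m + 1, m.succ_pos, fun ρ hp μ hμ v hv hv0 => ?_⟩
  have h0 : ρ.L 0 ≠ 0 := fun h =>
    smul_ne_zero hμ hv0 (by rw [← VirRep.mem_wt.1 hv, h, LinearMap.zero_apply])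
  let hW := ρ.isSubmod_wtCoset μ
  let v' : ρ.wtCoset μ := ⟨v, ρ.wt_le_wtCoset μ hv⟩
  let S := (wordSpan ℂ (VirRep.restrictL hW) m).map (LinearMap.applyₗ v')
  have reduction : MvPolynomial.idealOfVars ℤ ℂ ^ (m + 1) ≤ _ :=
    (Ideal.pow_le_pow_right m.le_succ).trans (hm ρ hp h0 μ)
  have isSubmod_S : ρ.IsSubmod (S.map (Submodule.subtype _)) := by
    rintro j _ ⟨w, hw, rfl⟩
    exact ⟨_, (VirRep.isProjWitt_restrictL hW).apply_mem_map_wordSpan reduction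
      (Subtype.ext (VirRep.mem_wt.1 hv)) j hw, rfl⟩
  have mem_S : v ∈ S.map (Submodule.subtype _) :=
    ⟨v', ⟨1, word_mem_wordSpan (l := []) m.zero_le, rfl⟩, rfl⟩
  refine (VirRep.genBy_le isSubmod_S mem_S).trans ?_
  rintro _ ⟨_, ⟨a, ha, rfl⟩, rfl⟩
  exact VirRep.coe_apply_mem_span_virpow hW hμ (v := v') hv ha

/-- Remark 3.2 of the paper. If `V` is a cuspidal weight
`Vir`-module with no trivial `Vir`-vector, then there is `m ∈ ℤ₊` such that for
every nonzero weight vector `v` of nonzero weight, every simple `Vir`-submodule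
`V'` of `U(Vir)v` satisfies `V' ⊆ Σ_{1 ≤ k ≤ m} Vir^k v`. -/
theorem stmt5 {V : Type} [AddCommGroup V] [Module ℂ V] (ρ : VirRep V)
    (hweight : ρ.IsWeight) (hcusp : ρ.Cuspidal)
    (hnotriv : ¬ ∃ v : V, v ≠ 0 ∧ ∀ m : ℤ, ρ.L m v = 0) :
    ∃ m : ℕ, 0 < m ∧ ∀ μ : ℂ, μ ≠ 0 → ∀ v ∈ ρ.wt μ, v ≠ 0 →
      ∀ V' : Submodule ℂ V, ρ.IsSimpleSubmod V' → V' ≤ ρ.genBy v →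
        V' ≤ Submodule.span ℂ (⋃ k ∈ Finset.Icc 1 m, ρ.virpow k {v}) := by
  obtain ⟨p, hp⟩ := hcusp.2
  obtain ⟨m, hm0, hm⟩ := stmt5_general p
  exact ⟨m, hm0, fun μ hμ v hv hv0 V' _ hV' => hV'.trans (hm ρ hp μ hμ v hv hv0)⟩
end

section
/- Let V be a 𝔮-module and suppose there exist integers n > m ≥ 1 such that Q_{r₁}Q_{r₂}⋯Q_{r_m}v = 0 for all v ∈ V and all r₁, r₂, …, r_m ∈ {0, ±1, ±2, …, ±n}. Then Q_{r₁}Q_{r₂}⋯Q_{r_m}v = 0 for all v ∈ V and all r₁, r₂, …, r_m ∈ ℤ. -/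
open Submodule

/-- A module over the Lie superalgebra `𝔮` (with even part the twisted
Heisenberg–Virasoro algebra and odd part spanned by the `Q_m`): a `ℤ/2`-graded
complex vector space with parity-preserving operators `L m`, `H m`,
parity-reversing operators `Q m`, and a scalar `c₀` (the action of the central
element `C`), subject to the defining relations. -/
structure QRep (V : Type) [AddCommGroup V] [Module ℂ V] : Type where
  L : ℤ → V →ₗ[ℂ] V
  H : ℤ → V →ₗ[ℂ] V
  Q : ℤ → V →ₗ[ℂ] V
  c₀ : ℂ
  even : Submodule ℂ V
  odd : Submodule ℂ V
  grading : IsCompl even odd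
  L_even : ∀ (m : ℤ), ∀ v ∈ even, L m v ∈ even
  L_odd : ∀ (m : ℤ), ∀ v ∈ odd, L m v ∈ odd
  H_even : ∀ (m : ℤ), ∀ v ∈ even, H m v ∈ even
  H_odd : ∀ (m : ℤ), ∀ v ∈ odd, H m v ∈ odd
  Q_even : ∀ (m : ℤ), ∀ v ∈ even, Q m v ∈ odd
  Q_odd : ∀ (m : ℤ), ∀ v ∈ odd, Q m v ∈ even
  rel_LL : ∀ (m n : ℤ) (v : V),
    L m (L n v) - L n (L m v) =
      ((n : ℂ) - (m : ℂ)) • L (m + n) v +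
        ((1 / 12 : ℂ) * ((n : ℂ) ^ 3 - (n : ℂ)) *
          (if m + n = 0 then (1 : ℂ) else 0) * c₀) • v
  rel_HH : ∀ (m n : ℤ) (v : V),
    H m (H n v) - H n (H m v) =
      ((1 / 3 : ℂ) * (m : ℂ) * (if m + n = 0 then (1 : ℂ) else 0) * c₀) • v
  rel_LH : ∀ (m n : ℤ) (v : V),
    L m (H n v) - H n (L m v) = (n : ℂ) • H (m + n) v
  rel_LQ : ∀ (m p : ℤ) (v : V),
    L m (Q p v) - Q p (L m v) = ((p : ℂ) - (m : ℂ) / 2) • Q (p + m) v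
  rel_HQ : ∀ (m p : ℤ) (v : V),
    H m (Q p v) - Q p (H m v) = Q (m + p) v
  rel_QQ : ∀ (p q : ℤ) (v : V), Q p (Q q v) + Q q (Q p v) = 0

namespace QRep

variable {V : Type} [AddCommGroup V] [Module ℂ V]

/-- The composite operator `Q_{r₁} Q_{r₂} ⋯ Q_{r_k}` applied to a vector, for a
list `[r₁, r₂, …, r_k]` of indices. -/
def Qcomp (ρ : QRep V) : List ℤ → V → V
  | [], v => v
  | r :: rs, v => ρ.Q r (ρ.Qcomp rs v)

/-- The weight space `V_μ = {v ∈ V : L₀ v = μ v}`. -/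
def wt (ρ : QRep V) (μ : ℂ) : Submodule ℂ V :=
  Module.End.eigenspace (ρ.L 0) μ

/-- The parity components, indexed by `ZMod 2`. -/
def parity (ρ : QRep V) (τ : ZMod 2) : Submodule ℂ V :=
  if τ = 0 then ρ.even else ρ.odd

/-- `V` is a weight module: it is the sum of its weight spaces. -/
def IsWeight (ρ : QRep V) : Prop := (⨆ μ : ℂ, ρ.wt μ) = ⊤

/-- `V` is cuspidal: a weight module with uniformly bounded weight multiplicities
in each parity. -/
def Cuspidal (ρ : QRep V) : Prop :=
  ρ.IsWeight ∧ ∃ p : ℕ, ∀ (μ : ℂ) (τ : ZMod 2),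
    Module.rank ℂ ↥(ρ.wt μ ⊓ ρ.parity τ) ≤ (p : Cardinal)

/-- A subspace invariant under all the operators. -/
def IsSubmod (ρ : QRep V) (W : Submodule ℂ V) : Prop :=
  (∀ (m : ℤ), ∀ v ∈ W, ρ.L m v ∈ W) ∧ (∀ (m : ℤ), ∀ v ∈ W, ρ.H m v ∈ W) ∧
    (∀ (m : ℤ), ∀ v ∈ W, ρ.Q m v ∈ W)

/-- A graded subspace invariant under all the operators. -/
def IsGradedSubmod (ρ : QRep V) (W : Submodule ℂ V) : Prop :=
  ρ.IsSubmod W ∧ W = (W ⊓ ρ.even) ⊔ (W ⊓ ρ.odd)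

/-- The trivial representation: all operators act by zero. -/
def IsTrivialRep (ρ : QRep V) : Prop :=
  ∀ (m : ℤ) (v : V), ρ.L m v = 0 ∧ ρ.H m v = 0 ∧ ρ.Q m v = 0

/-- `V` is simple: nontrivial, and its only graded submodules are `⊥` and `⊤`. -/
def IsSimple (ρ : QRep V) : Prop :=
  ¬ ρ.IsTrivialRep ∧
    ∀ W : Submodule ℂ V, ρ.IsGradedSubmod W → W = ⊥ ∨ W = ⊤

end QRep

/-!
Send the monomial `X₁^α₁ ⋯ X_m^α_m` to the product `Q_{α₁ε+r₁} ⋯ Q_{α_mε+r_m}`. By the Leibniz rule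
and `[H_k, Q_p] = Q_{k+p}`, multiplying a polynomial by the power sum `X₁^k + ⋯ + X_m^k` amounts to
taking the commutator with `H_{kε}`, so the kernel of this linear map is stable under power sums,
hence under all symmetric polynomials. As `X_i` is a root of the monic polynomial `∏ j, (T - X_j)`,
whose coefficients are symmetric, the vanishing for `m` consecutive values of one exponent
propagates to all larger ones. With `ε = ±1` this frees the indices `r₁, …, r_m`, one after the
other, from a window of `m` consecutive integers.
-/

section MonicRelations

open Polynomial

theorem pow_smul_mem_of_forall_lt_natDegree {T S M : Type*} [CommRing T] [Ring S] [Algebra T S]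
    [AddCommGroup M] [Module S M] [Module T M] [IsScalarTower T S M] {N : Submodule T M}
    {p : T[X]} (hp : p.Monic) {x : S} (hx : aeval x p = 0) {g : M}
    (hg : ∀ j < p.natDegree, x ^ j • g ∈ N) (j : ℕ) : x ^ j • g ∈ N := by
  rcases subsingleton_or_nontrivial T with _ | _
  · have := Module.subsingleton T M
    exact Subsingleton.elim 0 (x ^ j • g) ▸ N.zero_mem
  have hrem : x ^ j = aeval x (X ^ j %ₘ p) := by
    rw [aeval_modByMonic_eq_self_of_root hx, aeval_X_pow]
  rw [hrem, aeval_eq_sum_range, Finset.sum_smul]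
  refine N.sum_mem fun k _ => ?_
  rw [smul_assoc]
  rcases lt_or_ge k p.natDegree with hk | hk
  · exact N.smul_mem _ (hg k hk)
  · have hcoeff : (X ^ j %ₘ p).coeff k = 0 :=
      coeff_eq_zero_of_degree_lt <| (degree_modByMonic_lt _ hp).trans_le <|
        degree_le_of_natDegree_le hk
    rw [hcoeff, zero_smul]
    exact N.zero_mem

end MonicRelations

section SymmetricPolynomials

open MvPolynomial

variable {σ R : Type*} [Fintype σ] [CommRing R]

theorem esymm_mem_adjoin_range_psum [Algebra ℚ R] (k : ℕ) :
    esymm σ R k ∈ Algebra.adjoin R (Set.range (psum σ R)) := by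
  induction k using Nat.strong_induction_on with
  | _ k ih =>
    rcases Nat.eq_zero_or_pos k with rfl | hk
    · simpa only [esymm_zero] using one_mem _
    have hneg (j : ℕ) : (-1) ^ j ∈ Algebra.adjoin R (Set.range (psum σ R)) :=
      pow_mem (neg_mem (one_mem _)) j
    have hmul : (k : MvPolynomial σ R) * esymm σ R k ∈
        Algebra.adjoin R (Set.range (psum σ R)) := by
      rw [mul_esymm_eq_sum]
      refine mul_mem (hneg _) (sum_mem fun a ha => ?_)
      exact mul_mem (mul_mem (hneg _) (ih _ (Finset.mem_filter.mp ha).2))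
        (Algebra.subset_adjoin (Set.mem_range_self _))
    have hinv : algebraMap ℚ R (k : ℚ)⁻¹ • ((k : MvPolynomial σ R) * esymm σ R k) =
        esymm σ R k := by
      rw [algebraMap_smul, ← nsmul_eq_mul, ← Nat.cast_smul_eq_nsmul ℚ,
        inv_smul_smul₀ (Nat.cast_ne_zero.mpr hk.ne')]
    exact hinv ▸ Subalgebra.smul_mem _ hmul _

theorem adjoin_range_psum [Algebra ℚ R] :
    Algebra.adjoin R (Set.range (psum σ R)) = symmetricSubalgebra σ R := by
  refine le_antisymm (Algebra.adjoin_le ?_) fun s hs => ?_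
  · rintro _ ⟨k, rfl⟩
    exact psum_isSymmetric σ R k
  · obtain ⟨q, hq⟩ := esymmAlgHom_surjective R (le_refl (Fintype.card σ)) ⟨s, hs⟩
    have hs' : s ∈ Algebra.adjoin R
        (Set.range fun i : Fin (Fintype.card σ) => esymm σ R (i + 1)) := by
      rw [Algebra.adjoin_range_eq_range_aeval]
      exact ⟨q, (esymmAlgHom_apply q).symm.trans (congrArg Subtype.val hq)⟩
    refine Algebra.adjoin_le ?_ hs'
    rintro _ ⟨i, rfl⟩
    exact esymm_mem_adjoin_range_psum _

theorem mul_mem_of_isSymmetric [Algebra ℚ R] {K : Submodule R (MvPolynomial σ R)}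
    (hK : ∀ k, ∀ f ∈ K, psum σ R k * f ∈ K) {s : MvPolynomial σ R} (hs : s.IsSymmetric) :
    ∀ f ∈ K, s * f ∈ K := by
  rw [← mem_symmetricSubalgebra, ← adjoin_range_psum] at hs
  induction hs using Algebra.adjoin_induction with
  | mem _ hx =>
    obtain ⟨k, rfl⟩ := hx
    exact hK k
  | algebraMap c =>
    intro f hf
    rw [← Algebra.smul_def]
    exact K.smul_mem c hf
  | add x y _ _ hx hy =>
    intro f hf
    rw [add_mul]
    exact K.add_mem (hx f hf) (hy f hf)
  | mul x y _ _ hx hy =>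
    intro f hf
    rw [mul_assoc]
    exact hx _ (hy f hf)

theorem exists_monic_symmetricSubalgebra_aeval_X_eq_zero :
    ∃ p : Polynomial (symmetricSubalgebra σ R),
      p.Monic ∧ p.natDegree ≤ Fintype.card σ ∧
        ∀ i, Polynomial.aeval (X i : MvPolynomial σ R) p = 0 := by
  let q : Polynomial (MvPolynomial σ R) := ∏ j, (Polynomial.X - Polynomial.C (X j))
  have hq_monic : q.Monic := Polynomial.monic_prod_X_sub_C X Finset.univ
  have hq_map (e : Equiv.Perm σ) :
      q.map (rename e : MvPolynomial σ R →ₐ[R] MvPolynomial σ R).toRingHom = q := by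
    simpa [q, Polynomial.map_prod] using
      Equiv.prod_comp e fun j => (Polynomial.X - Polynomial.C (X j : MvPolynomial σ R))
  have hq_lifts :
      q ∈ Polynomial.lifts (algebraMap (symmetricSubalgebra σ R) (MvPolynomial σ R)) := by
    refine (Polynomial.lifts_iff_coeff_lifts q).mpr fun n => ⟨⟨q.coeff n, fun e => ?_⟩, rfl⟩
    conv_rhs => rw [← hq_map e, Polynomial.coeff_map]
    rfl
  obtain ⟨p, hp_map, hp_deg, hp_monic⟩ :=
    Polynomial.lifts_and_natDegree_eq_and_monic hq_lifts hq_monic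
  refine ⟨p, hp_monic, ?_, fun i => ?_⟩
  · calc p.natDegree = q.natDegree := hp_deg
      _ ≤ ∑ _j : σ, 1 := (Polynomial.natDegree_prod_le _ _).trans
          (Finset.sum_le_sum fun _ _ => Polynomial.natDegree_X_sub_C_le _)
      _ = Fintype.card σ := by simp
  · rw [← Polynomial.eval_map_algebraMap, hp_map, Polynomial.eval_prod]
    exact Finset.prod_eq_zero (Finset.mem_univ i) (by simp)

theorem X_pow_mul_mem_of_forall_lt_card [Algebra ℚ R] {K : Submodule R (MvPolynomial σ R)}
    (hK : ∀ k, ∀ f ∈ K, psum σ R k * f ∈ K) {i : σ} {g : MvPolynomial σ R}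
    (hg : ∀ j < Fintype.card σ, X i ^ j * g ∈ K) (j : ℕ) : X i ^ j * g ∈ K := by
  let N : Submodule (symmetricSubalgebra σ R) (MvPolynomial σ R) :=
    { K with smul_mem' := fun s f hf => mul_mem_of_isSymmetric hK s.2 f hf }
  obtain ⟨p, hp_monic, hp_deg, hp_root⟩ :=
    exists_monic_symmetricSubalgebra_aeval_X_eq_zero (σ := σ) (R := R)
  exact pow_smul_mem_of_forall_lt_natDegree (N := N) hp_monic (hp_root i)
    (fun k hk => hg k (hk.trans_le hp_deg)) j

end SymmetricPolynomials

section ShiftedProducts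

open MvPolynomial

variable {A : Type*} [Ring A]

theorem lie_prod_ofFn {m : ℕ} (h : A) (f : Fin m → A) :
    ⁅h, (List.ofFn f).prod⁆ = ∑ i, (List.ofFn (Function.update f i ⁅h, f i⁆)).prod := by
  induction m with
  | zero => simp [Ring.lie_def]
  | succ m ih =>
    cases f using Fin.consCases with | _ a f
    have hleibniz : ⁅h, a * (List.ofFn f).prod⁆ =
        ⁅h, a⁆ * (List.ofFn f).prod + a * ⁅h, (List.ofFn f).prod⁆ := by
      simp only [Ring.lie_def]
      noncomm_ring
    simp [Fin.sum_univ_succ, ← Fin.cons_update, ← Finset.mul_sum, ← ih, hleibniz]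

variable [Algebra ℚ A] {G : Type*} [AddMonoid G] {m : ℕ}

/-- The linear extension to polynomials of the family of products `Q_{α₁ε+r₁} ⋯ Q_{α_mε+r_m}`,
indexed by the exponents `α` of a monomial; it turns multiplication by a variable into a shift of
the corresponding index by `ε`. -/
noncomputable def shiftedProd (Q : G → A) (ε : G) (r : Fin m → G) :
    MvPolynomial (Fin m) ℚ →ₗ[ℚ] A :=
  (basisMonomials (Fin m) ℚ).constr ℚ fun α =>
    (List.ofFn fun i => Q (α i • ε + r i)).prod

theorem shiftedProd_monomial (Q : G → A) (ε : G) (r : Fin m → G) (α : Fin m →₀ ℕ) :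
    shiftedProd Q ε r (monomial α 1) = (List.ofFn fun i => Q (α i • ε + r i)).prod := by
  simpa [shiftedProd] using (basisMonomials (Fin m) ℚ).constr_basis ℚ
    (fun α => (List.ofFn fun i => Q (α i • ε + r i)).prod) α

theorem shiftedProd_X_pow (Q : G → A) (ε : G) (r : Fin m → G) (i : Fin m) (j : ℕ) :
    shiftedProd Q ε r (X i ^ j) =
      (List.ofFn (Q ∘ Function.update r i (j • ε + r i))).prod := by
  rw [X_pow_eq_monomial, shiftedProd_monomial]
  congr! with l
  rcases eq_or_ne l i with rfl | hl <;> simp [*]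

theorem shiftedProd_psum_mul {Q : G → A} {ε : G} {h : A} {k : ℕ}
    (hQ : ∀ p, ⁅h, Q p⁆ = Q (k • ε + p)) (r : Fin m → G) (f : MvPolynomial (Fin m) ℚ) :
    shiftedProd Q ε r (psum (Fin m) ℚ k * f) = ⁅h, shiftedProd Q ε r f⁆ := by
  suffices shiftedProd Q ε r ∘ₗ LinearMap.mulLeft ℚ (psum (Fin m) ℚ k) =
      (LinearMap.mulLeft ℚ h - LinearMap.mulRight ℚ h) ∘ₗ shiftedProd Q ε r from
    LinearMap.congr_fun this f
  refine (basisMonomials (Fin m) ℚ).ext fun α => ?_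
  have hupdate (i : Fin m) : (fun l => Q ((Finsupp.single i k + α) l • ε + r l)) =
      Function.update (fun l => Q (α l • ε + r l)) i ⁅h, Q (α i • ε + r i)⁆ := by
    ext l
    rcases eq_or_ne l i with rfl | hl
    · simp [hQ, add_nsmul, add_assoc]
    · simp [hl, Finsupp.single_eq_of_ne hl]
  calc shiftedProd Q ε r (psum (Fin m) ℚ k * monomial α 1)
      = ∑ i, shiftedProd Q ε r (monomial (Finsupp.single i k + α) 1) := by
        simp only [psum, X_pow_eq_monomial, Finset.sum_mul,
          monomial_mul, mul_one, map_sum]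
    _ = ⁅h, shiftedProd Q ε r (monomial α 1)⁆ := by
        simp only [shiftedProd_monomial, hupdate, lie_prod_ofFn]

theorem prod_ofFn_update_eq_zero_of_forall_lt {Q : G → A} {ε : G} {H : ℕ → A}
    (hHQ : ∀ k p, ⁅H k, Q p⁆ = Q (k • ε + p)) {r : Fin m → G} {i : Fin m}
    (hr : ∀ j < m, (List.ofFn (Q ∘ Function.update r i (j • ε + r i))).prod = 0) (j : ℕ) :
    (List.ofFn (Q ∘ Function.update r i (j • ε + r i))).prod = 0 := by
  have hK : ∀ k, ∀ f ∈ LinearMap.ker (shiftedProd Q ε r),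
      psum (Fin m) ℚ k * f ∈ LinearMap.ker (shiftedProd Q ε r) := by
    intro k f hf
    rw [LinearMap.mem_ker] at hf ⊢
    rw [shiftedProd_psum_mul (hHQ k), hf, Ring.lie_def, mul_zero, zero_mul, sub_zero]
  have hg : ∀ l < Fintype.card (Fin m), X i ^ l * 1 ∈ LinearMap.ker (shiftedProd Q ε r) := by
    simpa [shiftedProd_X_pow] using hr
  simpa [shiftedProd_X_pow] using X_pow_mul_mem_of_forall_lt_card hK hg j

end ShiftedProducts

section IntegerIndices

theorem forall_of_forall_mem_of_forall_update {ι : Type*} [Finite ι] [DecidableEq ι]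
    {α : ι → Type*} (W : ∀ i, Set (α i)) {P : (∀ i, α i) → Prop}
    (hupdate : ∀ r i, (∀ x ∈ W i, P (Function.update r i x)) → P r)
    (hW : ∀ r, (∀ i, r i ∈ W i) → P r) (r : ∀ i, α i) : P r := by
  have := Fintype.ofFinite ι
  suffices ∀ S : Finset ι, ∀ r, (∀ i ∉ S, r i ∈ W i) → P r from this Finset.univ r (by simp)
  intro S
  induction S using Finset.induction_on with
  | empty => exact fun r hr => hW r (by simpa using hr)
  | insert i S _ ih =>
    refine fun r hr => hupdate r i fun x hx => ih _ fun j hj => ?_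
    rcases eq_or_ne j i with rfl | hji
    · simpa using hx
    · simpa [hji] using hr j (by simp [hji, hj])

variable {A : Type*} [Ring A] [Algebra ℚ A] {H Q : ℤ → A}

theorem prod_ofFn_eq_zero_of_forall_update_Ico (hHQ : ∀ k p, ⁅H k, Q p⁆ = Q (k + p)) {m : ℕ} {a : ℤ}
    {r : Fin m → ℤ} (i : Fin m)
    (hr : ∀ x ∈ Set.Ico a (a + m), (List.ofFn (Q ∘ Function.update r i x)).prod = 0) :
    (List.ofFn (Q ∘ r)).prod = 0 := by
  have hray (b ε : ℤ) (hb : ∀ j < m, b + ε * j ∈ Set.Ico a (a + m)) (j : ℕ)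
      (hj : r i = b + ε * j) : (List.ofFn (Q ∘ r)).prod = 0 := by
    have hstart : ∀ l < m, (List.ofFn (Q ∘ Function.update (Function.update r i b) i
        (l • ε + Function.update r i b i))).prod = 0 := fun l hl => by
      simpa [add_comm, mul_comm] using hr _ (hb l hl)
    simpa [add_comm, mul_comm, ← hj] using
      prod_ofFn_update_eq_zero_of_forall_lt (fun k => hHQ (k • ε)) hstart j
  have hi := i.isLt
  rcases le_total a (r i) with ha | ha
  · exact hray a 1 (fun j hj => ⟨by lia, by lia⟩) (r i - a).toNat (by lia)
  · exact hray (a + m - 1) (-1) (fun j hj => ⟨by lia, by lia⟩) (a + m - 1 - r i).toNat (by lia)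

end IntegerIndices

theorem stmt6_general {A : Type*} [Ring A] [Algebra ℚ A] {H Q : ℤ → A}
    (hHQ : ∀ k p, ⁅H k, Q p⁆ = Q (k + p)) (m : ℕ) (a : ℤ)
    (h : ∀ rs : List ℤ, rs.length = m → (∀ r ∈ rs, r ∈ Set.Ico a (a + m)) →
      (rs.map Q).prod = 0) :
    ∀ rs : List ℤ, rs.length = m → (rs.map Q).prod = 0 := by
  rintro rs rfl
  have key := forall_of_forall_mem_of_forall_update (fun _ => Set.Ico a (a + rs.length))
    (P := fun r : Fin rs.length → ℤ => (List.ofFn (Q ∘ r)).prod = 0)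
    (fun _ i => prod_ofFn_eq_zero_of_forall_update_Ico hHQ i)
    (fun r hr => by simpa using h (List.ofFn r) (by simp) (by simpa using hr)) rs.get
  rwa [← List.map_ofFn, List.ofFn_get] at key

namespace QRep

variable {V : Type} [AddCommGroup V] [Module ℂ V] (ρ : QRep V)

theorem Qcomp_eq_prod_apply (rs : List ℤ) (v : V) : ρ.Qcomp rs v = (rs.map ρ.Q).prod v := by
  induction rs with
  | nil => rfl
  | cons r rs ih => simp [Qcomp, ih]

theorem forall_Qcomp_eq_zero_iff (rs : List ℤ) :
    (∀ v, ρ.Qcomp rs v = 0) ↔ (rs.map ρ.Q).prod = 0 := by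
  simp only [Qcomp_eq_prod_apply, LinearMap.ext_iff, LinearMap.zero_apply]

theorem lie_H_Q (k p : ℤ) : ⁅ρ.H k, ρ.Q p⁆ = ρ.Q (k + p) :=
  LinearMap.ext (ρ.rel_HQ k p)

end QRep

/-- Lemma 3.3 of the paper. If there are integers `n > m ≥ 1` such
that `Q_{r₁} Q_{r₂} ⋯ Q_{r_m} V = 0` for all indices in `{0, ±1, …, ±n}`, then
`Q_{r₁} Q_{r₂} ⋯ Q_{r_m} V = 0` for all indices in `ℤ`. -/
theorem stmt6 {V : Type} [AddCommGroup V] [Module ℂ V] (ρ : QRep V)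
    (m n : ℕ) (hm : 1 ≤ m) (hmn : m < n)
    (h : ∀ rs : List ℤ, rs.length = m → (∀ r ∈ rs, |r| ≤ (n : ℤ)) →
      ∀ v : V, ρ.Qcomp rs v = 0) :
    ∀ rs : List ℤ, rs.length = m → ∀ v : V, ρ.Qcomp rs v = 0 := by
  let : Algebra ℚ (Module.End ℂ V) := Algebra.compHom _ (algebraMap ℚ ℂ)
  simp only [QRep.forall_Qcomp_eq_zero_iff] at h ⊢
  exact stmt6_general ρ.lie_H_Q m 0 fun rs hrs hmem => h rs hrs fun r hr => by
    have := hmem r hr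
    grind
end
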